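/- arXiv:2203.06590 — 15 statements merged into one kernel-verified Lean document; each statement's English description precedes it below -/
import Mathlib

section
/- Let p, q be real with 0 < q and q/(q+1) < p, and let r = pq/(pq + p − q). Then for every s ∈ [0,∞), F_{p,q}( s/(1+s^q)^{1/q} ) = G_{r,q}(s). Equivalently, in terms of the generalized functions, sin_{p,q} x = sinh_{r,q} x / cosh_{r,q}^{r/q} x for all x ∈ [0, π_{p,q}/2) (the duality formula of Theorem 2.1). -/
/-!
The formula is the change of variables `t = φ u`, `φ u = u / (1 + u ^ q) ^ (1 / q)`, in the left
integral. One has `1 - φ u ^ q = (1 + u ^ q)⁻¹` (`one_sub_dualSubst_rpow`) and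
`φ' u = (1 + u ^ q) ^ (-1 / q - 1)` (`hasDerivAt_dualSubst`), so the integrand becomes a power of
`1 + u ^ q` with exponent `1 / p - 1 / q - 1 = -1 / r`.
-/

open MeasureTheory Real

/-- The substitution `u ↦ u / (1 + u ^ q) ^ (1 / q)`, mapping `[0, ∞)` to `[0, 1)` when `0 < q`. -/
noncomputable def dualSubst (q u : ℝ) : ℝ := u / (1 + u ^ q) ^ (1 / q)

lemma one_add_rpow_pos (q : ℝ) {u : ℝ} (hu : 0 ≤ u) : 0 < 1 + u ^ q := by
  have := rpow_nonneg hu q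
  linarith

lemma one_sub_dualSubst_rpow {q u : ℝ} (hq : 0 < q) (hu : 0 ≤ u) :
    1 - dualSubst q u ^ q = (1 + u ^ q)⁻¹ := by
  have h := one_add_rpow_pos q hu
  rw [dualSubst, div_rpow hu (rpow_nonneg h.le _), ← rpow_mul h.le, one_div_mul_cancel hq.ne',
    rpow_one]
  field_simp
  ring

/-- The derivative is taken at `u > 0` only: for `q < 1`, `u ^ q` is not differentiable at `0`. -/
lemma hasDerivAt_dualSubst {q u : ℝ} (hq : 0 < q) (hu : 0 < u) :
    HasDerivAt (dualSubst q) ((1 + u ^ q) ^ (-1 / q - 1)) u := by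
  have h := one_add_rpow_pos q hu.le
  have h1 : HasDerivAt (fun x : ℝ => 1 + x ^ q) (q * u ^ (q - 1)) u :=
    (hasDerivAt_rpow_const (Or.inl hu.ne')).const_add 1
  have h2 := (hasDerivAt_id u).div (h1.rpow_const (p := 1 / q) (Or.inl h.ne'))
    (rpow_pos_of_pos h _).ne'
  refine h2.congr_deriv ?_
  have e1 : (1 + u ^ q) ^ (1 / q - 1) = (1 + u ^ q) ^ (1 / q) / (1 + u ^ q) := by
    rw [rpow_sub h, rpow_one]
  have e2 : (1 + u ^ q) ^ (-1 / q - 1) = ((1 + u ^ q) ^ (1 / q))⁻¹ / (1 + u ^ q) := by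
    rw [rpow_sub h, rpow_one, neg_div, rpow_neg h.le]
  have e3 : u ^ (q - 1) = u ^ q / u := by rw [rpow_sub hu, rpow_one]
  have hA := rpow_pos_of_pos h (1 / q)
  simp only [id]
  rw [e1, e2, e3]
  generalize (1 + u ^ q) ^ (1 / q) = A at *
  generalize u ^ q = B at *
  field_simp
  ring

/-- Duality formula (Theorem 2.1): for `0 < q`, `q/(q+1) < p` and
`r = pq/(pq + p - q)`, one has `F_{p,q}(s/(1+s^q)^{1/q}) = G_{r,q}(s)` for
all `s ∈ [0,∞)`; equivalently `sin_{p,q} x = sinh_{r,q} x / cosh_{r,q}^{r/q} x`. -/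
theorem duality_trig_of_hyp (p q r : ℝ) (hq : 0 < q) (hp : q / (q + 1) < p)
    (hr : r = p * q / (p * q + p - q)) :
    ∀ s : ℝ, 0 ≤ s →
      (∫ t in (0:ℝ)..(s / (1 + s ^ q) ^ (1 / q)), (1 - t ^ q) ^ (-1 / p))
        = ∫ t in (0:ℝ)..s, (1 + t ^ q) ^ (-1 / r) := by
  intro s hs
  have hp0 : 0 < p := lt_trans (by positivity) hp
  have hexp : -1 / r = 1 / p + (-1 / q - 1) := by
    rw [hr, div_div_eq_mul_div]
    field_simp
    ring
  have hcont : Continuous fun u : ℝ => 1 + u ^ q :=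
    continuous_const.add (continuous_id.rpow_const fun _ => Or.inr hq.le)
  have hpow : ∀ a : ℝ, ContinuousOn (fun u : ℝ => (1 + u ^ q) ^ a) (Set.uIcc 0 s) := by
    intro a
    rw [Set.uIcc_of_le hs]
    exact hcont.continuousOn.rpow_const fun u hu => Or.inl (one_add_rpow_pos q hu.1).ne'
  have key := intervalIntegral.integral_comp_mul_deriv'' (a := 0) (b := s)
    (f := dualSubst q) (f' := fun u => (1 + u ^ q) ^ (-1 / q - 1))
    (g := fun t => (1 - t ^ q) ^ (-1 / p)) ?_ ?_ (hpow _) ?_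
  · have h0 : dualSubst q 0 = 0 := by simp [dualSubst]
    rw [h0] at key
    refine key.symm.trans (intervalIntegral.integral_congr fun u hu => ?_)
    rw [Set.uIcc_of_le hs] at hu
    have h := one_add_rpow_pos q hu.1
    simp only [Function.comp]
    rw [one_sub_dualSubst_rpow hq hu.1, hexp, rpow_add h, inv_rpow h.le, neg_div, rpow_neg h.le,
      inv_inv]
  · refine continuousOn_id.div (hpow _) fun u hu => ?_
    rw [Set.uIcc_of_le hs] at hu
    exact (rpow_pos_of_pos (one_add_rpow_pos q hu.1) _).ne'
  · intro u hu
    rw [min_eq_left hs] at hu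
    exact (hasDerivAt_dualSubst hq hu.1).hasDerivWithinAt
  · refine ContinuousOn.rpow_const
      (continuous_const.sub (continuous_id.rpow_const fun _ => Or.inr hq.le)).continuousOn ?_
    rintro _ ⟨u, hu, rfl⟩
    rw [Set.uIcc_of_le hs] at hu
    left
    rw [one_sub_dualSubst_rpow hq hu.1]
    exact (inv_pos.2 (one_add_rpow_pos q hu.1)).ne'
end

section
/- Let p, q be real with 0 < q and q/(q+1) < p, and let r = pq/(pq + p − q). Then for every y ∈ [0,1), G_{p,q}( y/(1−y^q)^{1/q} ) = F_{r,q}(y). Equivalently, in terms of the generalized functions, sinh_{p,q} x = sin_{r,q} x / cos_{r,q}^{r/q} x for all x ∈ [0, π_{r,q}/2) (the duality formula of Theorem 2.2). -/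
open MeasureTheory Real

/-!
The identity is the substitution `u = φ(t)` with `φ(t) = t / (1 - t^q)^(1/q)` in the left integral.
One has `1 + φ(t)^q = (1 - t^q)⁻¹` (`one_add_dual_rpow`) and `φ'(t) = (1 - t^q)^(-1/q - 1)`
(`hasDerivAt_dual`), so the transformed integrand is `(1 - t^q)` to the power
`1/p - 1/q - 1`, which equals `-1/r` by the choice of `r`.
-/

lemma one_sub_rpow_pos {q t : ℝ} (hq : 0 < q) (h0 : 0 ≤ t) (h1 : t < 1) : 0 < 1 - t ^ q :=
  sub_pos.2 (Real.rpow_lt_one h0 h1 hq)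

lemma one_add_dual_rpow {q t : ℝ} (hq : 0 < q) (h0 : 0 ≤ t) (h1 : t < 1) :
    1 + (t / (1 - t ^ q) ^ (1 / q)) ^ q = (1 - t ^ q)⁻¹ := by
  have hs := one_sub_rpow_pos hq h0 h1
  rw [Real.div_rpow h0 (by positivity), ← Real.rpow_mul hs.le, one_div_mul_cancel hq.ne',
    Real.rpow_one]
  field_simp
  ring

lemma hasDerivAt_dual {q t : ℝ} (hq : 0 < q) (h0 : 0 < t) (h1 : t < 1) :
    HasDerivAt (fun t : ℝ => t / (1 - t ^ q) ^ (1 / q)) ((1 - t ^ q) ^ (-1 / q - 1)) t := by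
  have hs := one_sub_rpow_pos hq h0.le h1
  have hd : HasDerivAt (fun t : ℝ => 1 - t ^ q) (-(q * t ^ (q - 1))) t :=
    (Real.hasDerivAt_rpow_const (Or.inl h0.ne')).const_sub 1
  have hpow := hd.rpow_const (p := 1 / q) (Or.inl hs.ne')
  refine ((hasDerivAt_id t).div hpow (by positivity)).congr_deriv ?_
  have e1 : t ^ (q - 1) = t ^ q / t := by rw [Real.rpow_sub_one h0.ne']
  have e2 : (1 - t ^ q) ^ (1 / q - 1) = (1 - t ^ q) ^ (1 / q) / (1 - t ^ q) := by
    rw [Real.rpow_sub_one hs.ne']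
  have e3 : (1 - t ^ q) ^ (-1 / q - 1) = ((1 - t ^ q) ^ (1 / q))⁻¹ / (1 - t ^ q) := by
    rw [Real.rpow_sub_one hs.ne', neg_div, Real.rpow_neg hs.le]
  have hA : 0 < (1 - t ^ q) ^ (1 / q) := by positivity
  rw [e1, e2, e3]
  generalize (1 - t ^ q) ^ (1 / q) = A at *
  simp only [id]
  generalize t ^ q = B at *
  field_simp
  ring

/-- Duality formula (Theorem 2.2): for `0 < q`, `q/(q+1) < p` and
`r = pq/(pq + p - q)`, one has `G_{p,q}(y/(1-y^q)^{1/q}) = F_{r,q}(y)` for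
all `y ∈ [0,1)`; equivalently `sinh_{p,q} x = sin_{r,q} x / cos_{r,q}^{r/q} x`. -/
theorem duality_hyp_of_trig (p q r : ℝ) (hq : 0 < q) (hp : q / (q + 1) < p)
    (hr : r = p * q / (p * q + p - q)) :
    ∀ y : ℝ, 0 ≤ y → y < 1 →
      (∫ t in (0:ℝ)..(y / (1 - y ^ q) ^ (1 / q)), (1 + t ^ q) ^ (-1 / p))
        = ∫ t in (0:ℝ)..y, (1 - t ^ q) ^ (-1 / r) := by
  intro y hy0 hy1
  have hp0 : 0 < p := lt_trans (by positivity) hp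
  have hden : 0 < p * q + p - q := by
    rw [div_lt_iff₀ (by positivity)] at hp
    linarith
  have hexp : -1 / r = -1 / q - 1 + 1 / p := by
    rw [hr]
    field_simp
    ring
  have hpos : ∀ t ∈ Set.uIcc 0 y, 0 < 1 - t ^ q := by
    intro t ht
    rw [Set.uIcc_of_le hy0] at ht
    exact one_sub_rpow_pos hq ht.1 (ht.2.trans_lt hy1)
  have hcs : ContinuousOn (fun t : ℝ => 1 - t ^ q) (Set.uIcc 0 y) :=
    continuousOn_const.sub (Real.continuous_rpow_const hq.le).continuousOn
  have hsub := intervalIntegral.integral_comp_mul_deriv'' (a := 0) (b := y)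
    (f := fun t : ℝ => t / (1 - t ^ q) ^ (1 / q)) (f' := fun t => (1 - t ^ q) ^ (-1 / q - 1))
    (g := fun u : ℝ => (1 + u ^ q) ^ (-1 / p))
    (continuousOn_id.div (hcs.rpow_const fun t ht => Or.inl (hpos t ht).ne')
      fun t ht => (Real.rpow_pos_of_pos (hpos t ht) _).ne')
    (fun t ht => by
      rw [min_eq_left hy0, max_eq_right hy0] at ht
      exact (hasDerivAt_dual hq ht.1 (ht.2.trans hy1)).hasDerivWithinAt)
    (hcs.rpow_const fun t ht => Or.inl (hpos t ht).ne')
    (by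
      refine (continuousOn_const.add
        (Real.continuous_rpow_const hq.le).continuousOn).rpow_const ?_
      rintro _ ⟨t, ht, rfl⟩
      have hs := hpos t ht
      rw [Set.uIcc_of_le hy0] at ht
      have ht0 := ht.1
      left
      have : 0 ≤ t / (1 - t ^ q) ^ (1 / q) := by positivity
      exact (add_pos_of_pos_of_nonneg one_pos (Real.rpow_nonneg this q)).ne')
  simp only [zero_div] at hsub
  rw [← hsub]
  refine intervalIntegral.integral_congr fun t ht => ?_
  have hs := hpos t ht
  rw [Set.uIcc_of_le hy0] at ht
  simp only [Function.comp]
  rw [one_add_dual_rpow hq ht.1 (ht.2.trans_lt hy1), hexp, Real.rpow_add hs, mul_comm,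
    Real.inv_rpow hs.le, neg_div p 1, Real.rpow_neg hs.le, inv_inv]
end

section
/- Let p, q be real with 0 < q and q/(q+1) < p, and let r = pq/(pq + p − q). Then ∫_0^∞ (1 + t^q)^(−1/p) dt = ∫_0^1 (1 − s^q)^(−1/r) ds; that is, lim_{y→∞} G_{p,q}(y) = π_{r,q}/2, so the generalized hyperbolic sine sinh_{p,q} is defined exactly on [0, π_{r,q}/2). -/
open MeasureTheory Real

/-!
The substitution `t = s (1 - s^q)^(-1/q)` maps `(0, 1)` bijectively onto `(0, ∞)`, with inverse
`s = t (1 + t^q)^(-1/q)`. It satisfies `1 + t^q = (1 - s^q)⁻¹` (`one_add_subst_rpow`) and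
`dt/ds = (1 - s^q)^(-1/q - 1)` (`hasDerivAt_subst`), so it turns the integrand
`(1 + t^q)^(-1/p) dt` into `(1 - s^q)^(1/p - 1/q - 1) ds`, whose exponent is `-1/r`.
The change of variables formula for the lower Lebesgue integral requires no integrability, so the
case where both sides are infinite is covered.
-/

/-- The substitution `s ↦ s (1 - s^q)^(-1/q)`, used for `s ∈ (0, 1)`. -/
noncomputable def subst (q s : ℝ) : ℝ := s * (1 - s ^ q) ^ (-1 / q)

lemma one_sub_rpow_pos_s4 {q s : ℝ} (hq : 0 < q) (hs : s ∈ Set.Ioo (0 : ℝ) 1) : 0 < 1 - s ^ q :=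
  sub_pos.2 (rpow_lt_one hs.1.le hs.2 hq)

lemma rpow_neg_inv_rpow {q a : ℝ} (hq : 0 < q) (ha : 0 < a) : (a ^ (-1 / q)) ^ q = a⁻¹ := by
  rw [← rpow_mul ha.le, div_mul_cancel₀ _ hq.ne', rpow_neg_one]

lemma one_add_subst_rpow {q s : ℝ} (hq : 0 < q) (hs : s ∈ Set.Ioo (0 : ℝ) 1) :
    1 + subst q s ^ q = (1 - s ^ q)⁻¹ := by
  have h := one_sub_rpow_pos_s4 hq hs
  rw [subst, mul_rpow hs.1.le (rpow_nonneg h.le _), rpow_neg_inv_rpow hq h]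
  field_simp
  ring

lemma hasDerivAt_subst {q s : ℝ} (hq : 0 < q) (hs : s ∈ Set.Ioo (0 : ℝ) 1) :
    HasDerivAt (subst q) ((1 - s ^ q) ^ (-1 / q - 1)) s := by
  have h := one_sub_rpow_pos_s4 hq hs
  have h1 : HasDerivAt (fun x : ℝ => 1 - x ^ q) (-(q * s ^ (q - 1))) s :=
    (hasDerivAt_rpow_const (Or.inl hs.1.ne')).const_sub 1
  have h2 := (hasDerivAt_id s).mul (h1.rpow_const (p := -1 / q) (Or.inl h.ne'))
  refine h2.congr_deriv ?_
  -- both summands of the product rule carry the factor `(1 - s^q)^(-1/q - 1)`,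
  -- and the cofactors `1 - s^q` and `s^q` add up to `1`
  have e1 : (1 - s ^ q) ^ (-1 / q) = (1 - s ^ q) ^ (-1 / q - 1) * (1 - s ^ q) := by
    rw [← rpow_add_one h.ne', sub_add_cancel]
  have e2 : s ^ q = s ^ (q - 1) * s := by
    rw [← rpow_add_one hs.1.ne', sub_add_cancel]
  have e3 : -(q * s ^ (q - 1)) * (-1 / q) = s ^ (q - 1) := by
    field_simp
  simp only [id, e3]
  rw [e1]
  generalize (1 - s ^ q) ^ (-1 / q - 1) = A
  rw [e2]
  ring

lemma subst_pos {q s : ℝ} (hq : 0 < q) (hs : s ∈ Set.Ioo (0 : ℝ) 1) : 0 < subst q s :=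
  mul_pos hs.1 (rpow_pos_of_pos (one_sub_rpow_pos_s4 hq hs) _)

lemma injOn_subst {q : ℝ} (hq : 0 < q) : Set.InjOn (subst q) (Set.Ioo (0 : ℝ) 1) := by
  intro s hs s' hs' h
  have h1 := one_add_subst_rpow hq hs
  rw [h, one_add_subst_rpow hq hs', inv_inj, sub_right_inj] at h1
  exact (rpow_left_injOn hq.ne' hs'.1.le hs.1.le h1).symm

lemma image_subst {q : ℝ} (hq : 0 < q) : subst q '' Set.Ioo (0 : ℝ) 1 = Set.Ioi 0 := by
  ext t
  constructor
  · rintro ⟨s, hs, rfl⟩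
    exact subst_pos hq hs
  · intro ht
    have ht : 0 < t := ht
    have htq : 0 < t ^ q := rpow_pos_of_pos ht q
    have h1 : 0 < 1 + t ^ q := by positivity
    have hs0 : 0 < t * (1 + t ^ q) ^ (-1 / q) := mul_pos ht (rpow_pos_of_pos h1 _)
    have hsq : 1 - (t * (1 + t ^ q) ^ (-1 / q)) ^ q = (1 + t ^ q)⁻¹ := by
      rw [mul_rpow ht.le (rpow_nonneg h1.le _), rpow_neg_inv_rpow hq h1]
      field_simp
      ring
    refine ⟨t * (1 + t ^ q) ^ (-1 / q), ⟨hs0, ?_⟩, ?_⟩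
    · have h2 : 0 < (1 + t ^ q)⁻¹ := inv_pos.2 h1
      by_contra! hge
      have := one_le_rpow hge hq.le
      linarith
    · rw [subst, hsq, inv_rpow h1.le, mul_assoc, mul_inv_cancel₀ (rpow_pos_of_pos h1 _).ne',
        mul_one]

/-- For `0 < q`, `q/(q+1) < p` and `r = pq/(pq + p - q)`,
`∫_0^∞ (1 + t^q)^{-1/p} dt = ∫_0^1 (1 - s^q)^{-1/r} ds`; that is,
`lim_{y→∞} G_{p,q}(y) = π_{r,q}/2` (possibly infinite), so the generalized
hyperbolic sine `sinh_{p,q}` is defined exactly on `[0, π_{r,q}/2)`. -/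
theorem hyp_total_length (p q r : ℝ) (hq : 0 < q) (hp : q / (q + 1) < p)
    (hr : r = p * q / (p * q + p - q)) :
    ∫⁻ t in Set.Ioi (0:ℝ), ENNReal.ofReal ((1 + t ^ q) ^ (-1 / p))
      = ∫⁻ s in Set.Ioo (0:ℝ) 1, ENNReal.ofReal ((1 - s ^ q) ^ (-1 / r)) := by
  have hp0 : 0 < p := lt_trans (by positivity) hp
  have hexp : -1 / r = (-1 / q - 1) + -(-1 / p) := by
    rw [hr, div_div_eq_mul_div]
    field_simp
    ring
  rw [← image_subst hq, lintegral_image_eq_lintegral_abs_deriv_mul measurableSet_Ioo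
    (fun s hs => (hasDerivAt_subst hq hs).hasDerivWithinAt) (injOn_subst hq)]
  refine setLIntegral_congr_fun measurableSet_Ioo fun s hs => ?_
  have h := one_sub_rpow_pos_s4 hq hs
  rw [abs_of_pos (rpow_pos_of_pos h _), ← ENNReal.ofReal_mul (rpow_nonneg h.le _),
    one_add_subst_rpow hq hs, inv_rpow h.le, ← rpow_neg h.le, ← rpow_add h, hexp]
end

section
/- (Mitrinović–Adamović-type inequality, trigonometric case.) Let p, q be real with 0 < q and q/(q+1) < p. Then for every y ∈ (0,1): F_{p,q}(y)·(1 − y^q)^{1/(p(q+1))} < y < F_{p,q}(y). Equivalently, cos_{p,q}^{1/(q+1)} x < (sin_{p,q} x)/x < 1 for all x ∈ (0, π_{p,q}/2). -/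
/-!
Write `b = 1 / (p (q + 1))`. The upper bound holds because the integrand exceeds `1` on `(0, y]`.
For the lower bound, it suffices that `F_{p,q}(y) < H(y)` with `H(t) = t (1 - t^q)^(-b)`.
Since `H(0) = 0`, this follows by integrating the pointwise inequality
`(1 - t^q)^(-1/p) < H'(t)`. With `s = t^q` and `1/p = b (q + 1)`, the latter reads
`(1 - s)^(1 - b q) < 1 - (1 - b q) s`, which is Bernoulli's strict inequality for the exponent
`1 - b q`; the condition `q / (q + 1) < p` says precisely that this exponent lies in `(0, 1)`.
-/

open MeasureTheory Real

/-- The derivative of `t (1 - t^q)^(-b)` (written out on the right, with `s = t^q`) exceeds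
`(1 - s)^(-b (q + 1))`. -/
lemma integrand_lt_deriv {b q s : ℝ} (hb : 0 < b) (hq : 0 < q) (hbq : b * q < 1)
    (hs : 0 < s) (hs1 : s < 1) :
    (1 - s) ^ (-(b * (q + 1))) < (1 - s) ^ (-b) + b * q * s * (1 - s) ^ (-b - 1) := by
  have hu : 0 < 1 - s := by linarith
  have hbern : (1 - s) ^ (1 - b * q) < 1 - (1 - b * q) * s := by
    have hbq0 : 0 < b * q := mul_pos hb hq
    have h := _root_.rpow_one_add_lt_one_add_mul_self (s := -s) (p := 1 - b * q)
      (by linarith) (by linarith) (by linarith) (by linarith)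
    calc (1 - s) ^ (1 - b * q) = (1 + -s) ^ (1 - b * q) := by rw [sub_eq_add_neg 1 s]
      _ < _ := h
      _ = _ := by ring
  have e1 : (1 - s) ^ (-(b * (q + 1))) = (1 - s) ^ (1 - b * q) * (1 - s) ^ (-b - 1) := by
    rw [← Real.rpow_add hu]; congr 1; ring
  have e2 : (1 - s) ^ (-b) = (1 - s) * (1 - s) ^ (-b - 1) := by
    rw [← Real.rpow_one_add' hu.le (by linarith)]; congr 1; ring
  rw [e1, e2, ← add_mul]
  exact mul_lt_mul_of_pos_right (by linarith) (Real.rpow_pos_of_pos hu _)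

/-- Mitrinović–Adamović-type inequality, trigonometric case: for `0 < q`,
`q/(q+1) < p`, and every `y ∈ (0,1)`,
`F_{p,q}(y) · (1 - y^q)^{1/(p(q+1))} < y < F_{p,q}(y)`. Equivalently,
`cos_{p,q}^{1/(q+1)} x < (sin_{p,q} x)/x < 1` for all `x ∈ (0, π_{p,q}/2)`. -/
theorem mitrinovic_adamovic_trig (p q : ℝ) (hq : 0 < q) (hp : q / (q + 1) < p) :
    ∀ y : ℝ, 0 < y → y < 1 →
      (∫ t in (0:ℝ)..y, (1 - t ^ q) ^ (-1 / p)) * (1 - y ^ q) ^ (1 / (p * (q + 1))) < y ∧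
      y < ∫ t in (0:ℝ)..y, (1 - t ^ q) ^ (-1 / p) := by
  intro y hy0 hy1
  have hq1 : 0 < q + 1 := by linarith
  have hp0 : 0 < p := (div_pos hq hq1).trans hp
  obtain ⟨b, hb_def⟩ : ∃ b, b = 1 / (p * (q + 1)) := ⟨_, rfl⟩
  have hb : 0 < b := by rw [hb_def]; positivity
  have hexp : -1 / p = -(b * (q + 1)) := by rw [hb_def]; field_simp
  have hbq : b * q < 1 := by
    rw [hb_def, one_div_mul_eq_div, div_lt_one (by positivity)]
    exact (div_lt_iff₀ hq1).1 hp
  have hs0 : ∀ t : ℝ, 0 < t → 0 < t ^ q := fun t ht => Real.rpow_pos_of_pos ht q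
  have hs1 : ∀ t : ℝ, 0 ≤ t → t ≤ y → t ^ q < 1 := fun t ht hty =>
    Real.rpow_lt_one ht (hty.trans_lt hy1) hq
  have hcq : Continuous fun t : ℝ => t ^ q := Real.continuous_rpow_const hq.le
  have hc : ∀ r : ℝ, ContinuousOn (fun t : ℝ => (1 - t ^ q) ^ r) (Set.Icc 0 y) := fun r =>
    (continuous_const.sub hcq).continuousOn.rpow_const fun t ht =>
      Or.inl (sub_pos.2 (hs1 t ht.1 ht.2)).ne'
  have hc' : ContinuousOn (fun t : ℝ => (1 - t ^ q) ^ (-b) + b * q * t ^ q * (1 - t ^ q) ^ (-b - 1))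
      (Set.Icc 0 y) :=
    (hc _).add ((continuous_const.mul hcq).continuousOn.mul (hc _))
  rw [hexp, ← hb_def]
  constructor
  · have hderiv : ∀ t ∈ Set.Ioo 0 y, HasDerivAt (fun t : ℝ => t * (1 - t ^ q) ^ (-b))
        ((1 - t ^ q) ^ (-b) + b * q * t ^ q * (1 - t ^ q) ^ (-b - 1)) t := by
      intro t ht
      have hu : 1 - t ^ q ≠ 0 := by have := hs1 t ht.1.le ht.2.le; linarith
      have h := (hasDerivAt_id t).mul
        (((Real.hasDerivAt_rpow_const (p := q) (Or.inl ht.1.ne')).const_sub 1).rpow_const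
          (p := -b) (Or.inl hu))
      refine h.congr_deriv ?_
      have e : t ^ q = t * t ^ (q - 1) := by
        rw [← Real.rpow_one_add' ht.1.le (by linarith)]; congr 1; ring
      have e' : b * q * t ^ q * (1 - t ^ q) ^ (-b - 1)
          = b * q * (t * t ^ (q - 1)) * (1 - t ^ q) ^ (-b - 1) := by rw [← e]
      rw [e']
      simp only [id]
      ring
    have hint := intervalIntegral.integral_eq_sub_of_hasDerivAt_of_le hy0.le
      (continuousOn_id.mul (hc (-b))) hderiv (hc'.intervalIntegrable_of_Icc hy0.le)
    have hlt := intervalIntegral.integral_lt_integral_of_continuousOn_of_le_of_exists_lt hy0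
      (hc (-(b * (q + 1)))) hc'
      (fun t ht => (integrand_lt_deriv hb hq hbq (hs0 t ht.1) (hs1 t ht.1.le ht.2)).le)
      ⟨y, ⟨hy0.le, le_rfl⟩, integrand_lt_deriv hb hq hbq (hs0 y hy0) (hs1 y hy0.le le_rfl)⟩
    have hu : 0 < 1 - y ^ q := by have := hs1 y hy0.le le_rfl; linarith
    rw [hint] at hlt
    simp only [id, Pi.mul_apply, zero_mul, sub_zero] at hlt
    rwa [Real.rpow_neg hu.le, ← div_eq_mul_inv, lt_div_iff₀ (Real.rpow_pos_of_pos hu b)] at hlt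
  · have hone : ∀ t : ℝ, 0 < t → t ≤ y → 1 < (1 - t ^ q) ^ (-(b * (q + 1))) := fun t ht hty =>
      Real.one_lt_rpow_of_pos_of_lt_one_of_neg (by have := hs1 t ht.le hty; linarith)
        (by have := hs0 t ht; linarith) (neg_neg_of_pos (mul_pos hb hq1))
    have hlt := intervalIntegral.integral_lt_integral_of_continuousOn_of_le_of_exists_lt hy0
      (continuousOn_const (c := (1 : ℝ))) (hc (-(b * (q + 1))))
      (fun t ht => (hone t ht.1 ht.2).le) ⟨y, ⟨hy0.le, le_rfl⟩, hone y hy0 le_rfl⟩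
    simpa using hlt
end

section
/- (Mitrinović–Adamović-type inequality, hyperbolic case.) Let p, q be real with 0 < q and q/(q+1) < p. Then for every s ∈ (0,∞): G_{p,q}(s)·(1 + s^q)^{1/(p(q+1))} < s < G_{p,q}(s)·(1 + s^q)^{1/q}. Equivalently, cosh_{p,q}^{1/(q+1)} x < (sinh_{p,q} x)/x < cosh_{p,q}^{p/q} x for all x ∈ (0, π_{r,q}/2), where r = pq/(pq + p − q). -/
/-!
For an exponent `c`, the function `s ↦ s (1 + s^q)^(-c)` vanishes at `0` and has derivative
`(1 + s^q)^(-c-1) (1 + (1 - c q) s^q)` on `(0,∞)`. Both inequalities compare this derivative with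
the integrand `(1 + s^q)^(-1/p)` of `G_{p,q}`.

* Lower bound, `c = 1/(p(q+1))`: with `u = s^q`, the derivative exceeds the integrand iff
  `(1 + u)^(1 - c q) < 1 + (1 - c q) u`, which is the strict Bernoulli inequality, as
  `0 < c q < 1` by `q/(q+1) < p`.
* Upper bound, `c = 1/q`: the derivative is `(1 + s^q)^(-1/q-1)`, smaller than the integrand since
  `1/p < 1/q + 1`, again by `q/(q+1) < p`.
-/

open MeasureTheory Real

namespace MitrinovicAdamovic

/-- Writing `|t|` for `t` in the integrand of `G_{p,q}` makes it continuous on all of `ℝ`, not just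
on `[0,∞)`. -/
lemma continuous_integrand (p q : ℝ) (hq : 0 < q) :
    Continuous fun t : ℝ => (1 + |t| ^ q) ^ (-1 / p) := by
  refine (continuous_const.add (continuous_abs.rpow_const fun _ => Or.inr hq.le)).rpow_const
    fun t => Or.inl ?_
  exact (add_pos_of_pos_of_nonneg one_pos (rpow_nonneg (abs_nonneg t) q)).ne'

lemma integral_eq (p q s : ℝ) (hs : 0 < s) :
    ∫ t in (0:ℝ)..s, (1 + t ^ q) ^ (-1 / p) = ∫ t in (0:ℝ)..s, (1 + |t| ^ q) ^ (-1 / p) := by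
  refine intervalIntegral.integral_congr fun t ht => ?_
  rw [Set.uIcc_of_le hs.le] at ht
  simp only [abs_of_nonneg ht.1]

lemma hasDerivAt_mul_rpow (q c x : ℝ) (hx : 0 < x) :
    HasDerivAt (fun s : ℝ => s * (1 + s ^ q) ^ (-c))
      ((1 + x ^ q) ^ (-c - 1) * (1 + (1 - c * q) * x ^ q)) x := by
  have hu : 0 < x ^ q := rpow_pos_of_pos hx q
  have h1 : HasDerivAt (fun s : ℝ => 1 + s ^ q) (q * x ^ (q - 1)) x :=
    (hasDerivAt_rpow_const (Or.inl hx.ne')).const_add 1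
  have h2 := (hasDerivAt_id x).mul (h1.rpow_const (p := -c) (Or.inl (by positivity)))
  refine HasDerivAt.congr_deriv h2 ?_
  have e1 : (1 + x ^ q) ^ (-c) = (1 + x ^ q) ^ (-c - 1) * (1 + x ^ q) := by
    rw [← rpow_add_one (by positivity)]; congr 1; ring
  have e2 : x ^ q = x ^ (q - 1) * x := by
    rw [← rpow_add_one hx.ne']; congr 1; ring
  rw [e1, id]
  linear_combination (c * q * (1 + x ^ q) ^ (-c - 1)) * e2

lemma continuousOn_mul_rpow (q c : ℝ) (hq : 0 < q) :
    ContinuousOn (fun s : ℝ => s * (1 + s ^ q) ^ (-c)) (Set.Ici 0) := by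
  refine continuousOn_id.mul (ContinuousOn.rpow_const
    (continuousOn_const.add (continuousOn_id.rpow_const fun _ _ => Or.inr hq.le)) fun t ht => ?_)
  exact Or.inl (add_pos_of_pos_of_nonneg one_pos (rpow_nonneg (Set.mem_Ici.1 ht) q)).ne'

lemma hasDerivAt_integral (p q x : ℝ) (hq : 0 < q) (hx : 0 < x) :
    HasDerivAt (fun s : ℝ => ∫ t in (0:ℝ)..s, (1 + |t| ^ q) ^ (-1 / p))
      ((1 + x ^ q) ^ (-1 / p)) x := by
  have h := (continuous_integrand p q hq).integral_hasStrictDerivAt 0 x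
  simpa only [abs_of_pos hx] using h.hasDerivAt

lemma pos_of_deriv_pos {F F' : ℝ → ℝ} (hF : ContinuousOn F (Set.Ici 0)) (h0 : F 0 = 0)
    (hd : ∀ x, 0 < x → HasDerivAt F (F' x) x) (hpos : ∀ x, 0 < x → 0 < F' x)
    (s : ℝ) (hs : 0 < s) : 0 < F s := by
  have hm : StrictMonoOn F (Set.Ici 0) := by
    refine strictMonoOn_of_deriv_pos (convex_Ici 0) hF fun x hx => ?_
    rw [interior_Ici] at hx
    rw [(hd x hx).deriv]
    exact hpos x hx
  simpa [h0] using hm Set.self_mem_Ici hs.le hs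

end MitrinovicAdamovic

open MitrinovicAdamovic in
/-- Mitrinović–Adamović-type inequality, hyperbolic case: for `0 < q`,
`q/(q+1) < p`, and every `s ∈ (0,∞)`,
`G_{p,q}(s) · (1 + s^q)^{1/(p(q+1))} < s < G_{p,q}(s) · (1 + s^q)^{1/q}`.
Equivalently, `cosh_{p,q}^{1/(q+1)} x < (sinh_{p,q} x)/x < cosh_{p,q}^{p/q} x`
for all `x ∈ (0, π_{r,q}/2)`, where `r = pq/(pq + p - q)`. -/
theorem mitrinovic_adamovic_hyp (p q : ℝ) (hq : 0 < q) (hp : q / (q + 1) < p) :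
    ∀ s : ℝ, 0 < s →
      (∫ t in (0:ℝ)..s, (1 + t ^ q) ^ (-1 / p)) * (1 + s ^ q) ^ (1 / (p * (q + 1))) < s ∧
      s < (∫ t in (0:ℝ)..s, (1 + t ^ q) ^ (-1 / p)) * (1 + s ^ q) ^ (1 / q) := by
  intro s hs
  have hp0 : 0 < p := lt_trans (by positivity) hp
  have hpq : q < p * (q + 1) := (div_lt_iff₀ (by positivity)).1 hp
  rw [integral_eq p q s hs]
  have hG : ContinuousOn (fun s : ℝ => ∫ t in (0:ℝ)..s, (1 + |t| ^ q) ^ (-1 / p)) (Set.Ici 0) :=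
    (intervalIntegral.continuous_primitive
      (fun a b => (continuous_integrand p q hq).intervalIntegrable a b) 0).continuousOn
  have hu : 0 < s ^ q := rpow_pos_of_pos hs q
  constructor
  · set c := 1 / (p * (q + 1)) with hc
    have hc0 : 0 < c := by positivity
    have hcq : c * q < 1 := by
      rw [hc, one_div_mul_eq_div]; exact (div_lt_one (by positivity)).2 hpq
    have key := pos_of_deriv_pos ((continuousOn_mul_rpow q c hq).sub hG) (by simp)
      (fun x hx => (hasDerivAt_mul_rpow q c x hx).sub (hasDerivAt_integral p q x hq hx))
      (fun x hx => by
        have hx' : 0 < x ^ q := rpow_pos_of_pos hx q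
        have hB : (1 + x ^ q) ^ (1 - c * q) < 1 + (1 - c * q) * x ^ q :=
          rpow_one_add_lt_one_add_mul_self (by linarith) hx'.ne' (by linarith)
            (by nlinarith [mul_pos hc0 hq])
        have e : (1 + x ^ q) ^ (-1 / p) = (1 + x ^ q) ^ (-c - 1) * (1 + x ^ q) ^ (1 - c * q) := by
          rw [← rpow_add (by positivity)]
          congr 1
          rw [hc]
          field_simp
          ring
        rw [e]
        exact sub_pos.2 (mul_lt_mul_of_pos_left hB (by positivity))) s hs
    have key' := sub_pos.1 key
    simp only at key'
    rw [rpow_neg (by positivity), ← div_eq_mul_inv] at key'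
    exact (lt_div_iff₀ (by positivity)).1 key'
  · have key := pos_of_deriv_pos (hG.sub (continuousOn_mul_rpow q (1 / q) hq)) (by simp)
      (fun x hx => (hasDerivAt_integral p q x hq hx).sub (hasDerivAt_mul_rpow q (1 / q) x hx))
      (fun x hx => by
        have hx' : 0 < x ^ q := rpow_pos_of_pos hx q
        have e : 1 + (1 - 1 / q * q) * x ^ q = 1 := by field_simp; ring
        rw [e, mul_one]
        refine sub_pos.2 (rpow_lt_rpow_of_exponent_lt (by linarith) ?_)
        have : -1 / p - (-(1 / q) - 1) = (p * (q + 1) - q) / (p * q) := by field_simp; ring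
        have : 0 < (p * (q + 1) - q) / (p * q) := div_pos (by linarith) (by positivity)
        linarith) s hs
    have key' := sub_pos.1 key
    simp only at key'
    rw [rpow_neg (by positivity), ← div_eq_mul_inv] at key'
    exact (div_lt_iff₀ (by positivity)).1 key'
end

section
/- (Wilker-type inequality, trigonometric case.) Let p, q be real with 0 < q and q/(q+1) < p, and let r = pq/(pq + p − q). Then for every y ∈ (0,1), writing x = F_{p,q}(y): (y/x)^p + ( y / ( (1 − y^q)^{1/q} · x ) )^r > 2. Equivalently, ((sin_{p,q} x)/x)^p + ((tam_{p,q} x)/x)^r > 2 for all x ∈ (0, π_{p,q}/2), where tam_{p,q} x = sin_{p,q} x / cos_{p,q}^{p/q} x. -/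
open MeasureTheory Real

lemma integrand_continuousOn {q y : ℝ} (c : ℝ) (hq : 0 < q) (hy : y < 1) :
    ContinuousOn (fun t : ℝ => (1 - t ^ q) ^ c) (Set.Icc 0 y) := by
  refine ContinuousOn.rpow_const ?_ ?_
  · exact continuousOn_const.sub (continuousOn_id.rpow_const (fun _ _ => Or.inr hq.le))
  · intro t ht
    exact Or.inl (one_sub_rpow_pos hq ht.1 (ht.2.trans_lt hy)).ne'

/-- The Mitrinović–Adamović type bound `(cos x) ^ (1 / (q + 1)) < sin x / x`, in terms of
`y = sin x`. -/
lemma mitrinovic_adamovic {p q : ℝ} (hq : 0 < q) (hp0 : 0 < p) (hp : q / (q + 1) < p)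
    {y : ℝ} (hy0 : 0 < y) (hy1 : y < 1) :
    ∫ t in (0:ℝ)..y, (1 - t ^ q) ^ (-1 / p) < y * (1 - y ^ q) ^ (-(1 / (p * (q + 1)))) := by
  set s := 1 / (p * (q + 1)) with hs
  have hs0 : 0 < s := by positivity
  have hqs : q * s < 1 := by
    rw [hs, mul_one_div, div_lt_one (by positivity)]
    rwa [div_lt_iff₀ (by positivity)] at hp
  have hpe : -1 / p = -s - 1 + (1 - q * s) := by
    rw [hs]; field_simp; ring
  have hcont := integrand_continuousOn (-1 / p) hq hy1
  have hmono : StrictMonoOn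
      (fun z : ℝ => z * (1 - z ^ q) ^ (-s) - ∫ t in (0:ℝ)..z, (1 - t ^ q) ^ (-1 / p))
      (Set.Icc 0 y) := by
    refine strictMonoOn_of_deriv_pos (convex_Icc 0 y) ?_ ?_
    · refine (continuousOn_id.mul (integrand_continuousOn _ hq hy1)).sub ?_
      have := intervalIntegral.continuousOn_primitive_interval
        (μ := volume) (a := 0) (b := y) (f := fun t : ℝ => (1 - t ^ q) ^ (-1 / p)) (by
          rw [Set.uIcc_of_le hy0.le]; exact hcont.integrableOn_Icc)
      rwa [Set.uIcc_of_le hy0.le] at this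
    · intro z hz
      rw [interior_Icc] at hz
      obtain ⟨hz0, hzy⟩ := hz
      have hz1 := hzy.trans hy1
      have hw := one_sub_rpow_pos hq hz0.le hz1
      have hI : HasDerivAt (fun z : ℝ => ∫ t in (0:ℝ)..z, (1 - t ^ q) ^ (-1 / p))
          ((1 - z ^ q) ^ (-1 / p)) z := by
        refine intervalIntegral.integral_hasDerivAt_of_tendsto_ae_right ?_ ?_ ?_
        · apply ContinuousOn.intervalIntegrable
          rw [Set.uIcc_of_le hz0.le]
          exact integrand_continuousOn _ hq hz1
        · exact ContinuousOn.stronglyMeasurableAtFilter_nhdsWithin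
            (s := Set.Icc 0 y) hcont measurableSet_Icc z |>.filter_mono (by
              rw [nhdsWithin_eq_nhds.2 (Icc_mem_nhds hz0 hzy)])
        · exact (hcont.continuousAt (Icc_mem_nhds hz0 hzy)).tendsto.mono_left inf_le_left
      have h1 : HasDerivAt (fun z : ℝ => 1 - z ^ q) (-(q * z ^ (q - 1))) z := by
        simpa using (Real.hasDerivAt_rpow_const (p := q) (Or.inl hz0.ne')).const_sub 1
      have h2 := ((hasDerivAt_id z).mul (h1.rpow_const (p := -s) (Or.inl hw.ne'))).sub hI
      have h3 := h2.deriv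
      change 0 < deriv (fun z : ℝ => id z * (1 - z ^ q) ^ (-s) -
        ∫ t in (0:ℝ)..z, (1 - t ^ q) ^ (-1 / p)) z
      refine lt_of_lt_of_eq ?_ h3.symm
      have hzq : z * z ^ (q - 1) = z ^ q := by
        rw [Real.rpow_sub_one hz0.ne']; field_simp
      have hu : 0 < z ^ q := Real.rpow_pos_of_pos hz0 q
      have hwa : (1 - z ^ q) ^ (-s) = (1 - z ^ q) ^ (-s - 1) * (1 - z ^ q) := by
        rw [Real.rpow_sub_one hw.ne']; field_simp
      have hwb : (1 - z ^ q) ^ (-1 / p) =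
          (1 - z ^ q) ^ (-s - 1) * (1 - z ^ q) ^ (1 - q * s) := by
        rw [hpe, Real.rpow_add hw]
      have hB : (1 - z ^ q) ^ (1 - q * s) < 1 - (1 - q * s) * z ^ q := by
        have := rpow_one_add_lt_one_add_mul_self (s := -z ^ q) (p := 1 - q * s)
          (by linarith) (by linarith) (by linarith) (by nlinarith [mul_pos hq hs0])
        rw [← sub_eq_add_neg] at this
        linarith
      have hpos : 0 < (1 - z ^ q) ^ (-s - 1) := Real.rpow_pos_of_pos hw _
      have key := mul_pos hpos (sub_pos.2 hB)
      rw [hwa, hwb]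
      refine lt_of_lt_of_eq key ?_
      simp only [id]
      rw [← hzq]
      ring
  have := hmono (Set.left_mem_Icc.2 hy0.le) (Set.right_mem_Icc.2 hy0.le) hy0
  simp only [intervalIntegral.integral_same, zero_mul, sub_zero] at this
  linarith

/-- Wilker-type inequality, trigonometric case: for `0 < q`, `q/(q+1) < p`,
`r = pq/(pq + p - q)`, and every `y ∈ (0,1)`, writing `x = F_{p,q}(y)`,
`(y/x)^p + (y/((1 - y^q)^{1/q} · x))^r > 2`. Equivalently,
`((sin_{p,q} x)/x)^p + ((tam_{p,q} x)/x)^r > 2` on `(0, π_{p,q}/2)`. -/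
theorem wilker_trig (p q r : ℝ) (hq : 0 < q) (hp : q / (q + 1) < p)
    (hr : r = p * q / (p * q + p - q)) :
    ∀ y : ℝ, 0 < y → y < 1 →
      (y / ∫ t in (0:ℝ)..y, (1 - t ^ q) ^ (-1 / p)) ^ p +
        (y / ((1 - y ^ q) ^ (1 / q) * ∫ t in (0:ℝ)..y, (1 - t ^ q) ^ (-1 / p))) ^ r
        > 2 := by
  intro y hy0 hy1
  have hp0 : 0 < p := lt_trans (by positivity) hp
  have hMA := mitrinovic_adamovic hq hp0 hp hy0 hy1
  have hx : 0 < ∫ t in (0:ℝ)..y, (1 - t ^ q) ^ (-1 / p) := by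
    refine intervalIntegral.intervalIntegral_pos_of_pos_on ?_ ?_ hy0
    · apply ContinuousOn.intervalIntegrable
      rw [Set.uIcc_of_le hy0.le]
      exact integrand_continuousOn _ hq hy1
    · intro t ht
      exact Real.rpow_pos_of_pos (one_sub_rpow_pos hq ht.1.le (ht.2.trans hy1)) _
  have hw := one_sub_rpow_pos hq hy0.le hy1
  generalize (∫ t in (0:ℝ)..y, (1 - t ^ q) ^ (-1 / p)) = x at hMA hx ⊢
  generalize 1 - y ^ q = w at hMA hw ⊢
  have hd : 0 < p * q + p - q := by
    rw [div_lt_iff₀ (by positivity)] at hp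
    linarith
  have hr0 : 0 < r := by rw [hr]; positivity
  have ha : 0 < y / x := by positivity
  have hsplit : y / (w ^ (1 / q) * x) = (y / x) * w ^ (-(1 / q)) := by
    rw [Real.rpow_neg hw.le]; field_simp
  have haw : w ^ (1 / (p * (q + 1))) < y / x := by
    rw [Real.rpow_neg hw.le, ← div_eq_mul_inv, lt_div_iff₀ (by positivity)] at hMA
    rw [lt_div_iff₀ hx]
    linarith
  have hAB : 1 < (y / x) ^ p * (y / (w ^ (1 / q) * x)) ^ r := by
    rw [hsplit, Real.mul_rpow ha.le (by positivity), ← mul_assoc, ← Real.rpow_add ha,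
      ← Real.rpow_mul hw.le]
    have h1 := Real.rpow_lt_rpow (by positivity) haw (add_pos hp0 hr0)
    rw [← Real.rpow_mul hw.le] at h1
    have he : 1 / (p * (q + 1)) * (p + r) = -(-(1 / q) * r) := by
      have hr' : r * (p * q + p - q) = p * q := by rw [hr, div_mul_cancel₀ _ hd.ne']
      field_simp
      linarith
    rw [he, Real.rpow_neg hw.le, inv_lt_iff_one_lt_mul₀ (by positivity)] at h1
    linarith
  have hA : 0 < (y / x) ^ p := by positivity
  have hB : 0 < (y / (w ^ (1 / q) * x)) ^ r := by positivity
  nlinarith [sq_nonneg ((y / x) ^ p - (y / (w ^ (1 / q) * x)) ^ r)]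
end

section
/- (Wilker-type inequality, hyperbolic case.) Let p, q be real with 0 < q and q/(q+1) < p, and let r = pq/(pq + p − q). Then for every s ∈ (0,∞), writing x = G_{p,q}(s): (s/x)^p + ( s / ( (1 + s^q)^{1/q} · x ) )^r > 2. Equivalently, ((sinh_{p,q} x)/x)^p + ((tamh_{p,q} x)/x)^r > 2 for all x ∈ (0, π_{r,q}/2), where tamh_{p,q} x = sinh_{p,q} x / cosh_{p,q}^{p/q} x. -/
open MeasureTheory Real

/-!
Write `c = 1 + s ^ q`, `x = ∫₀ˢ (1 + t ^ q) ^ (-1/p)` and `A`, `B` for the two summands. The dual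
exponent satisfies `r / q = (p + r) / (p * (q + 1))`, hence
`A * B = ((s / x) / c ^ (1 / (p * (q + 1)))) ^ (p + r)`. By the inequality of arithmetic and
geometric means it suffices to have `A * B > 1`, which is the Mitrinović–Adamović-type bound
`x < s * c ^ (-1 / (p * (q + 1)))` of `integral_lt`. That bound follows by comparing derivatives in
`s`: with `k = 1 / (p * (q + 1))` it reduces to Bernoulli's inequality
`(1 + s ^ q) ^ (1 - k * q) < 1 + (1 - k * q) * s ^ q`, where `0 < k * q < 1` is the
hypothesis `q / (q + 1) < p`.
-/

/-- With `y = s ^ q`, the right-hand side is the derivative of `s * (1 + s ^ q) ^ (-k)`, and for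
`k = 1 / (p * (q + 1))` the left-hand side is the integrand, its exponent being `-1 / p`. -/
lemma integrand_lt_deriv_s8 {q k y : ℝ} (hy : 0 < y) (hkq : 0 < k * q) (hkq1 : k * q < 1) :
    (1 + y) ^ (-(k * (q + 1))) < (1 + y) ^ (-k - 1) * (1 + (1 - k * q) * y) := by
  have hb : (1 + y) ^ (1 - k * q) < 1 + (1 - k * q) * y :=
    rpow_one_add_lt_one_add_mul_self (by linarith) hy.ne' (by linarith) (by linarith)
  have he : (1 + y) ^ (-(k * (q + 1))) = (1 + y) ^ (-k - 1) * (1 + y) ^ (1 - k * q) := by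
    rw [← rpow_add (by linarith)]
    congr 1
    ring
  rw [he]
  exact mul_lt_mul_of_pos_left hb (rpow_pos_of_pos (by linarith) _)

lemma hasDerivAt_comparison {q k s : ℝ} (hs : 0 < s) :
    HasDerivAt (fun t : ℝ => t * (1 + t ^ q) ^ (-k))
      ((1 + s ^ q) ^ (-k - 1) * (1 + (1 - k * q) * s ^ q)) s := by
  have hc : 0 < 1 + s ^ q := by positivity
  have h1 : HasDerivAt (fun t : ℝ => 1 + t ^ q) (q * s ^ (q - 1)) s :=
    (hasDerivAt_rpow_const (Or.inl hs.ne')).const_add 1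
  have h2 := (hasDerivAt_id s).mul (h1.rpow_const (p := -k) (Or.inl hc.ne'))
  refine h2.congr_deriv ?_
  have e1 : s ^ q = s ^ (q - 1) * s := by
    rw [rpow_sub_one hs.ne']
    field_simp
  have e2 : (1 + s ^ q) ^ (-k) = (1 + s ^ q) ^ (-k - 1) * (1 + s ^ q) := by
    rw [rpow_sub_one hc.ne']
    field_simp
  simp only [id]
  rw [e2]
  linear_combination (-k * q * (1 + s ^ q) ^ (-k - 1)) * (-e1)

/-- The Mitrinović–Adamović-type inequality `cosh ^ (1 / (q + 1)) < sinh x / x`, in terms of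
`s = sinh x`. -/
lemma integral_lt {p q k s : ℝ} (hq : 0 < q) (hk : k * (q + 1) = 1 / p) (hkq : 0 < k * q)
    (hkq1 : k * q < 1) (hs : 0 < s) :
    ∫ t in (0:ℝ)..s, (1 + t ^ q) ^ (-1 / p) < s * (1 + s ^ q) ^ (-k) := by
  -- Replacing `t` by `|t|` makes the integrand continuous on all of `ℝ`.
  have hcong : ∫ t in (0:ℝ)..s, (1 + t ^ q) ^ (-1 / p)
      = ∫ t in (0:ℝ)..s, (1 + |t| ^ q) ^ (-1 / p) := by
    refine intervalIntegral.integral_congr fun t ht => ?_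
    rw [Set.uIcc_of_le hs.le] at ht
    simp only [abs_of_nonneg ht.1]
  have hcont : Continuous fun t : ℝ => (1 + |t| ^ q) ^ (-1 / p) := by
    refine Continuous.rpow_const ?_ fun t => Or.inl (by positivity)
    exact continuous_const.add (continuous_abs.rpow_const fun _ => Or.inr hq.le)
  have hD : ∀ u, HasDerivAt (fun u => ∫ t in (0:ℝ)..u, (1 + |t| ^ q) ^ (-1 / p))
      ((1 + |u| ^ q) ^ (-1 / p)) u := fun u => (hcont.integral_hasStrictDerivAt 0 u).hasDerivAt
  have hmono : StrictMonoOn (fun u : ℝ => u * (1 + u ^ q) ^ (-k)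
      - ∫ t in (0:ℝ)..u, (1 + |t| ^ q) ^ (-1 / p)) (Set.Ici 0) := by
    refine strictMonoOn_of_deriv_pos (convex_Ici 0) ?_ fun u hu => ?_
    · refine ContinuousOn.sub (continuousOn_id.mul ?_)
        fun u _ => (hD u).continuousAt.continuousWithinAt
      refine ContinuousOn.rpow_const ?_ fun u hu => Or.inl ?_
      · exact continuousOn_const.add (continuousOn_id.rpow_const fun _ _ => Or.inr hq.le)
      · have : 0 ≤ u ^ q := rpow_nonneg hu q
        positivity
    · rw [interior_Ici] at hu
      have hu0 : 0 < u := hu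
      have hder := (hasDerivAt_comparison (q := q) (k := k) hu0).fun_sub (hD u)
      rw [hder.deriv, abs_of_pos hu0, sub_pos]
      have := integrand_lt_deriv_s8 (rpow_pos_of_pos hu0 q) hkq hkq1
      rwa [hk, ← neg_div] at this
  have := hmono (Set.mem_Ici.2 le_rfl) (Set.mem_Ici.2 hs.le) hs
  simp only [zero_mul, intervalIntegral.integral_same, sub_zero] at this
  rw [hcong]
  linarith

/-- Wilker-type inequality, hyperbolic case: for `0 < q`, `q/(q+1) < p`,
`r = pq/(pq + p - q)`, and every `s ∈ (0,∞)`, writing `x = G_{p,q}(s)`,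
`(s/x)^p + (s/((1 + s^q)^{1/q} · x))^r > 2`. Equivalently,
`((sinh_{p,q} x)/x)^p + ((tamh_{p,q} x)/x)^r > 2` on `(0, π_{r,q}/2)`. -/
theorem wilker_hyp (p q r : ℝ) (hq : 0 < q) (hp : q / (q + 1) < p)
    (hr : r = p * q / (p * q + p - q)) :
    ∀ s : ℝ, 0 < s →
      (s / ∫ t in (0:ℝ)..s, (1 + t ^ q) ^ (-1 / p)) ^ p +
        (s / ((1 + s ^ q) ^ (1 / q) * ∫ t in (0:ℝ)..s, (1 + t ^ q) ^ (-1 / p))) ^ r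
        > 2 := by
  intro s hs
  have hp0 : 0 < p := lt_trans (by positivity) hp
  have hpq : q < p * (q + 1) := (div_lt_iff₀ (by linarith)).1 hp
  have hd : 0 < p * q + p - q := by linarith
  have hr0 : 0 < r := by rw [hr]; positivity
  obtain ⟨k, hk⟩ : ∃ k, k = 1 / (p * (q + 1)) := ⟨_, rfl⟩
  have hkq0 : 0 < k * q := by rw [hk]; positivity
  have hkq1 : k * q < 1 := by
    rw [hk, one_div_mul_eq_div]
    exact (div_lt_one (by positivity)).2 hpq
  have hlt := integral_lt (p := p) hq (by rw [hk]; field_simp) hkq0 hkq1 hs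
  have hx : 0 < ∫ t in (0:ℝ)..s, (1 + t ^ q) ^ (-1 / p) := by
    refine intervalIntegral.intervalIntegral_pos_of_pos_on ?_ (fun t ht => ?_) hs
    · refine ContinuousOn.intervalIntegrable_of_Icc hs.le (ContinuousOn.rpow_const ?_ ?_)
      · exact continuousOn_const.add (continuousOn_id.rpow_const fun _ _ => Or.inr hq.le)
      · intro t ht
        have : 0 ≤ t ^ q := rpow_nonneg ht.1 q
        exact Or.inl (by positivity)
    · have : 0 < t ^ q := rpow_pos_of_pos ht.1 q
      positivity
  generalize (∫ t in (0:ℝ)..s, (1 + t ^ q) ^ (-1 / p)) = x at hlt hx ⊢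
  have hc : 0 < 1 + s ^ q := by positivity
  generalize 1 + s ^ q = c at hlt hc ⊢
  have hX : 0 < s / x := by positivity
  have hXc : c ^ k < s / x := by
    rw [rpow_neg hc.le, ← div_eq_mul_inv, lt_div_iff₀ (by positivity)] at hlt
    rw [lt_div_iff₀ hx]
    linarith
  have hA : 0 < (s / x) ^ p := by positivity
  have hB : 0 < (s / (c ^ (1 / q) * x)) ^ r := by positivity
  have hAB : 1 < (s / x) ^ p * (s / (c ^ (1 / q) * x)) ^ r := by
    have e1 : s / (c ^ (1 / q) * x) = s / x / c ^ (1 / q) := by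
      rw [div_div, mul_comm x]
    have e2 : 1 / q * r = k * (p + r) := by
      have hr' : r * (p * q + p - q) = p * q := by rw [hr, div_mul_cancel₀ _ hd.ne']
      rw [hk]
      field_simp
      linear_combination hr'
    rw [e1, div_rpow hX.le (by positivity), ← rpow_mul hc.le, e2, rpow_mul hc.le, ← mul_div_assoc,
      ← rpow_add hX, one_lt_div (by positivity)]
    exact rpow_lt_rpow (by positivity) hXc (by linarith)
  generalize (s / x) ^ p = A at *
  generalize (s / (c ^ (1 / q) * x)) ^ r = B at *
  nlinarith [sq_nonneg (A - B)]
end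

section
/- (Huygens-type inequality, trigonometric case.) Let p, q be real with 0 < q and q/(q+1) < p, and let r = pq/(pq + p − q). Then for every y ∈ (0,1), writing x = F_{p,q}(y): p·(y/x) + r·( y / ( (1 − y^q)^{1/q} · x ) ) > p + r. Equivalently, p·(sin_{p,q} x)/x + r·(tam_{p,q} x)/x > p + r for all x ∈ (0, π_{p,q}/2), where tam_{p,q} x = sin_{p,q} x / cos_{p,q}^{p/q} x. -/
open MeasureTheory Real

/-!
Put `G z = p z + r z (1 - z^q)^(-1/q) - (p + r) F z`. Since `z (1 - z^q)^(-1/q)` has derivative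
`(1 - z^q)^(-1/q - 1)`, with `u = 1 - z^q ∈ (0,1)` one gets
`G' z = p + r u^(-(1 + 1/q)) - (p + r) u^(-1/p)`.
The dual exponent satisfies `(1 + 1/q) · r / (p + r) = 1/p`, so `G' > 0` is exactly the strict
weighted AM-GM inequality for `1` and `u^(-(1 + 1/q))` with weights `p/(p+r)` and `r/(p+r)`
(`huygens_amgm`). Hence `G y > G 0 = 0`, and dividing by `F y > 0` gives the claim.
-/

/-- Strict weighted AM-GM for `1` and `u^(-1/q-1)`, obtained from Bernoulli's inequality with
exponent `r/(p+r)`; it says that `G' > 0`, with `u = 1 - z^q`. -/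
lemma huygens_amgm {p q r u : ℝ} (hq : 0 < q) (hp0 : 0 < p) (hD : 0 < p * q + p - q)
    (hr : r = p * q / (p * q + p - q)) (hu0 : 0 < u) (hu1 : u < 1) :
    (p + r) * u ^ (-1 / p) < p + r * u ^ (-1 / q - 1) := by
  have hr0 : 0 < r := by rw [hr]; positivity
  have hs : 1 < u ^ (-1 / q - 1) := by
    apply Real.one_lt_rpow_of_pos_of_lt_one_of_neg hu0 hu1
    have : 0 < 1 / q := by positivity
    rw [neg_div]; linarith
  have hw1 : r / (p + r) < 1 := by rw [div_lt_one (by positivity)]; linarith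
  have hw0 : 0 < r / (p + r) := by positivity
  have hB := rpow_one_add_lt_one_add_mul_self (s := u ^ (-1 / q - 1) - 1)
    (by linarith) (by linarith) hw0 hw1
  have he : (-1 / q - 1) * (r / (p + r)) = -1 / p := by
    have hrD : r * (p * q + p - q) = p * q := by rw [hr, div_mul_cancel₀ _ hD.ne']
    field_simp
    linear_combination (-1 : ℝ) * hrD
  rw [add_sub_cancel, ← Real.rpow_mul hu0.le, he] at hB
  calc (p + r) * u ^ (-1 / p)
      < (p + r) * (1 + r / (p + r) * (u ^ (-1 / q - 1) - 1)) := by gcongr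
    _ = p + r * u ^ (-1 / q - 1) := by field_simp; ring

/-- The function `z / (1 - z^q)^(1/q)`, which is `tam` in the variable `z = sin x`, has derivative
`(1 - z^q)^(-1/q-1)`. -/
lemma hasDerivAt_tam {q z : ℝ} (hq : 0 < q) (h0 : 0 < z) (h1 : z < 1) :
    HasDerivAt (fun z : ℝ => z * (1 - z ^ q) ^ (-1 / q)) ((1 - z ^ q) ^ (-1 / q - 1)) z := by
  have hu := one_sub_rpow_pos hq h0.le h1
  have hd := (hasDerivAt_id' z).mul
    (((Real.hasDerivAt_rpow_const (p := q) (Or.inl h0.ne')).const_sub 1).rpow_const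
      (p := -1 / q) (Or.inl hu.ne'))
  have e1 : (1 - z ^ q) ^ (-1 / q) = (1 - z ^ q) ^ (-1 / q - 1) * (1 - z ^ q) := by
    rw [← Real.rpow_add_one hu.ne']; congr 1; ring
  have e2 : z ^ q = z ^ (q - 1) * z := by
    rw [← Real.rpow_add_one h0.ne']; congr 1; ring
  have e3 : q * (-1 / q) = -1 := by field_simp
  have e : (1 - z ^ q) ^ (-1 / q - 1) = 1 * (1 - z ^ q) ^ (-1 / q) +
      z * (-(q * z ^ (q - 1)) * (-1 / q) * (1 - z ^ q) ^ (-1 / q - 1)) := by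
    linear_combination -e1 + (1 - z ^ q) ^ (-1 / q - 1) * e2 +
      z * z ^ (q - 1) * (1 - z ^ q) ^ (-1 / q - 1) * e3
  rw [e]
  exact hd

/-- Huygens-type inequality, trigonometric case: for `0 < q`, `q/(q+1) < p`,
`r = pq/(pq + p - q)`, and every `y ∈ (0,1)`, writing `x = F_{p,q}(y)`,
`p·(y/x) + r·(y/((1 - y^q)^{1/q} · x)) > p + r`. Equivalently,
`p·(sin_{p,q} x)/x + r·(tam_{p,q} x)/x > p + r` on `(0, π_{p,q}/2)`. -/
theorem huygens_trig (p q r : ℝ) (hq : 0 < q) (hp : q / (q + 1) < p)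
    (hr : r = p * q / (p * q + p - q)) :
    ∀ y : ℝ, 0 < y → y < 1 →
      p * (y / ∫ t in (0:ℝ)..y, (1 - t ^ q) ^ (-1 / p)) +
        r * (y / ((1 - y ^ q) ^ (1 / q) * ∫ t in (0:ℝ)..y, (1 - t ^ q) ^ (-1 / p)))
        > p + r := by
  intro y hy0 hy1
  have hp0 : 0 < p := lt_trans (by positivity) hp
  have hD : 0 < p * q + p - q := by
    rw [div_lt_iff₀ (by positivity)] at hp; linarith
  have hcpow : ∀ c : ℝ, ContinuousOn (fun t : ℝ => (1 - t ^ q) ^ c) (Set.Ico 0 1) := fun c =>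
    ContinuousOn.rpow_const
      (continuousOn_const.sub (continuousOn_id.rpow_const fun _ _ => Or.inr hq.le))
      fun t ht => Or.inl (one_sub_rpow_pos hq ht.1 ht.2).ne'
  have hsub : Set.Icc 0 y ⊆ Set.Ico 0 1 := fun t ht => ⟨ht.1, ht.2.trans_lt hy1⟩
  have hint : ∀ z, 0 ≤ z → z < 1 →
      IntervalIntegrable (fun t : ℝ => (1 - t ^ q) ^ (-1 / p)) volume 0 z := fun z h0 h1 =>
    ((hcpow _).mono (by
      rw [Set.uIcc_of_le h0]
      exact fun t ht => ⟨ht.1, ht.2.trans_lt h1⟩)).intervalIntegrable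
  have hF0 : 0 < ∫ t in (0:ℝ)..y, (1 - t ^ q) ^ (-1 / p) :=
    intervalIntegral.intervalIntegral_pos_of_pos_on (hint y hy0.le hy1)
      (fun t ht => Real.rpow_pos_of_pos (one_sub_rpow_pos hq ht.1.le (ht.2.trans hy1)) _) hy0
  have hFd : ∀ z, 0 < z → z < 1 →
      HasDerivAt (fun z => ∫ t in (0:ℝ)..z, (1 - t ^ q) ^ (-1 / p)) ((1 - z ^ q) ^ (-1 / p)) z := by
    intro z h0 h1
    have hc := (hcpow (-1 / p)).mono Set.Ioo_subset_Ico_self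
    exact intervalIntegral.integral_hasDerivAt_right (hint z h0.le h1)
      (hc.stronglyMeasurableAtFilter isOpen_Ioo z ⟨h0, h1⟩)
      (hc.continuousAt (isOpen_Ioo.mem_nhds ⟨h0, h1⟩))
  have hFc : ContinuousOn (fun z => ∫ t in (0:ℝ)..z, (1 - t ^ q) ^ (-1 / p)) (Set.Icc 0 y) := by
    have h := intervalIntegral.continuousOn_primitive_interval' (hint y hy0.le hy1)
      Set.left_mem_uIcc
    rwa [Set.uIcc_of_le hy0.le] at h
  have hmono : StrictMonoOn (fun z : ℝ => p * z + r * (z * (1 - z ^ q) ^ (-1 / q)) -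
      (p + r) * ∫ t in (0:ℝ)..z, (1 - t ^ q) ^ (-1 / p)) (Set.Icc 0 y) := by
    apply strictMonoOn_of_deriv_pos (convex_Icc 0 y)
    · exact ((continuousOn_const.mul continuousOn_id).add (continuousOn_const.mul
        (continuousOn_id.mul ((hcpow _).mono hsub)))).sub (continuousOn_const.mul hFc)
    · intro z hz
      rw [interior_Icc] at hz
      have hz1 := hz.2.trans hy1
      have hd := (((hasDerivAt_id' z).const_mul p).add
        ((hasDerivAt_tam hq hz.1 hz1).const_mul r)).sub ((hFd z hz.1 hz1).const_mul (p + r))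
      have hd' := hd.deriv
      simp only [Pi.add_def, Pi.sub_def] at hd'
      rw [hd']
      have := huygens_amgm hq hp0 hD hr (one_sub_rpow_pos hq hz.1.le hz1)
        (by linarith [Real.rpow_pos_of_pos hz.1 q])
      linarith
  have hG := hmono (Set.left_mem_Icc.2 hy0.le) (Set.right_mem_Icc.2 hy0.le) hy0
  simp only [intervalIntegral.integral_same, mul_zero, zero_mul, add_zero, sub_zero] at hG
  have hu := one_sub_rpow_pos hq hy0.le hy1
  have hv := Real.rpow_pos_of_pos hu (1 / q)
  rw [neg_div, Real.rpow_neg hu.le] at hG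
  set F := ∫ t in (0:ℝ)..y, (1 - t ^ q) ^ (-1 / p)
  have hkey : p * (y / F) + r * (y / ((1 - y ^ q) ^ (1 / q) * F)) =
      (p * y + r * (y * ((1 - y ^ q) ^ (1 / q))⁻¹)) / F := by
    rw [add_div, mul_div_assoc, mul_div_assoc, ← div_eq_mul_inv, div_div]
  rw [hkey, gt_iff_lt, lt_div_iff₀ hF0]
  linarith
end

section
/- (Huygens-type inequality, hyperbolic case.) Let p, q be real with 0 < q and q/(q+1) < p, and let r = pq/(pq + p − q). Then for every s ∈ (0,∞), writing x = G_{p,q}(s): p·(s/x) + r·( s / ( (1 + s^q)^{1/q} · x ) ) > p + r. Equivalently, p·(sinh_{p,q} x)/x + r·(tamh_{p,q} x)/x > p + r for all x ∈ (0, π_{r,q}/2), where tamh_{p,q} x = sinh_{p,q} x / cosh_{p,q}^{p/q} x. -/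
/-!
Write `x(s) = ∫₀ˢ (1 + t^q)^(-1/p) dt`. After clearing the positive denominator `x(s)`, the claim is
that `F(s) = p s + r s (1 + s^q)^(-1/q) - (p + r) x(s)` is positive for `s > 0`. One has `F(0) = 0`,
and with `u = 1 + s^q > 1`,
`F'(s) = p + r u^(-1/q - 1) - (p + r) u^(-1/p)`.
The dual exponent satisfies `1/r + 1/p = 1 + 1/q`, so that `u^(-1/q - 1) = v^((p + r)/r)` with
`v = u^(-1/p)`, and `F'(s) > 0` is the strict Bernoulli inequality for `v ≠ 1`
(`weighted_bernoulli`). Hence `F` is strictly increasing on `[0, ∞)`.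
-/

open MeasureTheory Real

/-- Strict weighted AM-GM for the numbers `1` and `u ^ (-1 / q - 1)` with weights `p` and `r`. -/
lemma weighted_bernoulli {p q r u : ℝ} (hp : 0 < p) (hr : 0 < r)
    (hdual : 1 / r + 1 / p = 1 + 1 / q) (hu : 1 < u) :
    (p + r) * u ^ (-1 / p) < p + r * u ^ (-1 / q - 1) := by
  have hv0 : 0 < u ^ (-1 / p) := rpow_pos_of_pos (by linarith) _
  have hv1 : u ^ (-1 / p) < 1 :=
    rpow_lt_one_of_one_lt_of_neg hu (div_neg_of_neg_of_pos (by norm_num) hp)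
  have hexp : -1 / q - 1 = -1 / p * ((p + r) / r) := by
    have h : -1 / p * ((p + r) / r) = -(1 / r + 1 / p) := by field_simp
    rw [h, hdual]; ring
  have ha : 1 < (p + r) / r := by rw [one_lt_div hr]; linarith
  have hb := one_add_mul_self_lt_rpow_one_add (s := u ^ (-1 / p) - 1) (by linarith)
    (sub_neg.2 hv1).ne ha
  rw [add_sub_cancel, ← rpow_mul (by linarith), ← hexp] at hb
  have hb' := mul_lt_mul_of_pos_left hb hr
  have h2 : r * (1 + (p + r) / r * (u ^ (-1 / p) - 1)) = (p + r) * u ^ (-1 / p) - p := by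
    field_simp; ring
  linarith

lemma hasDerivAt_mul_one_add_rpow {q s : ℝ} (hq : 0 < q) (hs : 0 < s) :
    HasDerivAt (fun s : ℝ => s * (1 + s ^ q) ^ (-1 / q)) ((1 + s ^ q) ^ (-1 / q - 1)) s := by
  have hsq : 0 < s ^ q := rpow_pos_of_pos hs q
  have hu : 0 < 1 + s ^ q := by linarith
  have h1 : HasDerivAt (fun s : ℝ => 1 + s ^ q) (q * s ^ (q - 1)) s :=
    (Real.hasDerivAt_rpow_const (Or.inl hs.ne')).const_add 1
  have h2 := (hasDerivAt_id s).mul (h1.rpow_const (p := -1 / q) (Or.inl hu.ne'))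
  refine h2.congr_deriv ?_
  have e1 : (1 + s ^ q) ^ (-1 / q) = (1 + s ^ q) ^ (-1 / q - 1) * (1 + s ^ q) := by
    rw [← rpow_add_one hu.ne']; congr 1; ring
  have e2 : s ^ (q - 1) = s ^ q / s := rpow_sub_one hs.ne' q
  simp only [id]
  rw [e1, e2]
  field_simp
  ring

lemma continuousOn_one_add_rpow {q : ℝ} (hq : 0 < q) (c : ℝ) :
    ContinuousOn (fun t : ℝ => (1 + t ^ q) ^ c) (Set.Ici 0) := by
  refine ContinuousOn.rpow_const ?_ ?_
  · exact (continuous_const.add (continuous_id.rpow_const fun _ => Or.inr hq.le)).continuousOn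
  · intro t ht
    have := rpow_nonneg (Set.mem_Ici.mp ht) q
    exact Or.inl (by positivity)

/-- Huygens-type inequality, hyperbolic case: for `0 < q`, `q/(q+1) < p`,
`r = pq/(pq + p - q)`, and every `s ∈ (0,∞)`, writing `x = G_{p,q}(s)`,
`p·(s/x) + r·(s/((1 + s^q)^{1/q} · x)) > p + r`. Equivalently,
`p·(sinh_{p,q} x)/x + r·(tamh_{p,q} x)/x > p + r` on `(0, π_{r,q}/2)`. -/
theorem huygens_hyp (p q r : ℝ) (hq : 0 < q) (hp : q / (q + 1) < p)
    (hr : r = p * q / (p * q + p - q)) :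
    ∀ s : ℝ, 0 < s →
      p * (s / ∫ t in (0:ℝ)..s, (1 + t ^ q) ^ (-1 / p)) +
        r * (s / ((1 + s ^ q) ^ (1 / q) * ∫ t in (0:ℝ)..s, (1 + t ^ q) ^ (-1 / p)))
        > p + r := by
  intro s hs
  have hp0 : 0 < p := lt_trans (by positivity) hp
  have hd : 0 < p * q + p - q := by
    rw [div_lt_iff₀ (by linarith)] at hp
    linarith
  have hr0 : 0 < r := by rw [hr]; positivity
  have hdual : 1 / r + 1 / p = 1 + 1 / q := by
    rw [hr]; field_simp; ring
  have hcont := continuousOn_one_add_rpow hq (-1 / p)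
  have hint : ∀ y : ℝ, 0 ≤ y →
      IntervalIntegrable (fun t : ℝ => (1 + t ^ q) ^ (-1 / p)) volume 0 y := fun y hy =>
    (hcont.mono (by rw [Set.uIcc_of_le hy]; exact Set.Icc_subset_Ici_self)).intervalIntegrable
  have hxpos : 0 < ∫ t in (0:ℝ)..s, (1 + t ^ q) ^ (-1 / p) := by
    refine intervalIntegral.intervalIntegral_pos_of_pos_on (hint s hs.le) ?_ hs
    intro t ht
    have := rpow_nonneg ht.1.le q
    positivity
  set F : ℝ → ℝ := fun y => p * y + r * (y * (1 + y ^ q) ^ (-1 / q)) -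
    (p + r) * ∫ t in (0:ℝ)..y, (1 + t ^ q) ^ (-1 / p) with hF
  have hderiv : ∀ y : ℝ, 0 < y → HasDerivAt F
      (p + r * (1 + y ^ q) ^ (-1 / q - 1) - (p + r) * (1 + y ^ q) ^ (-1 / p)) y := by
    intro y hy
    have hG : HasDerivAt (fun y => ∫ t in (0:ℝ)..y, (1 + t ^ q) ^ (-1 / p))
        ((1 + y ^ q) ^ (-1 / p)) y :=
      intervalIntegral.integral_hasDerivAt_right (hint y hy.le)
        ((hcont.mono Set.Ioi_subset_Ici_self).stronglyMeasurableAtFilter isOpen_Ioi y hy)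
        (hcont.continuousAt (Ici_mem_nhds hy))
    have h1 := (hasDerivAt_id y).const_mul p
    rw [mul_one] at h1
    exact (h1.add ((hasDerivAt_mul_one_add_rpow hq hy).const_mul r)).sub (hG.const_mul (p + r))
  have hFcont : ContinuousOn F (Set.Icc 0 s) := by
    have hIcc : Set.Icc 0 s ⊆ Set.Ici (0 : ℝ) := Set.Icc_subset_Ici_self
    have hprim : ContinuousOn (fun y => ∫ t in (0:ℝ)..y, (1 + t ^ q) ^ (-1 / p))
        (Set.Icc 0 s) := by
      have h := intervalIntegral.continuousOn_primitive_interval (μ := volume) (a := 0) (b := s)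
        (f := fun t : ℝ => (1 + t ^ q) ^ (-1 / p))
        (by rw [Set.uIcc_of_le hs.le]
            exact (hcont.mono hIcc).integrableOn_Icc)
      rwa [Set.uIcc_of_le hs.le] at h
    have h2 := (continuousOn_one_add_rpow hq (-1 / q)).mono hIcc
    exact ((continuousOn_const.mul continuousOn_id).add
      (continuousOn_const.mul (continuousOn_id.mul h2))).sub (continuousOn_const.mul hprim)
  have hmono : StrictMonoOn F (Set.Icc 0 s) := by
    refine strictMonoOn_of_deriv_pos (convex_Icc 0 s) hFcont ?_
    intro y hy
    rw [interior_Icc] at hy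
    rw [(hderiv y hy.1).deriv]
    have := weighted_bernoulli hp0 hr0 hdual
      (show 1 < 1 + y ^ q by linarith [rpow_pos_of_pos hy.1 q])
    linarith
  have hpos := hmono (Set.left_mem_Icc.2 hs.le) (Set.right_mem_Icc.2 hs.le) hs
  simp only [hF, intervalIntegral.integral_same, mul_zero, zero_mul, add_zero, sub_zero] at hpos
  have hu : 0 < 1 + s ^ q := by linarith [rpow_pos_of_pos hs q]
  have hneg : (1 + s ^ q) ^ (-1 / q) = ((1 + s ^ q) ^ (1 / q))⁻¹ := by
    rw [neg_div, rpow_neg hu.le]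
  rw [hneg] at hpos
  have hw : 0 < (1 + s ^ q) ^ (1 / q) := rpow_pos_of_pos hu _
  generalize (1 + s ^ q) ^ (1 / q) = w at *
  generalize (∫ t in (0:ℝ)..s, (1 + t ^ q) ^ (-1 / p)) = x at *
  have heq : p * (s / x) + r * (s / (w * x)) = (p * s + r * (s * w⁻¹)) / x := by
    field_simp
  rw [heq, gt_iff_lt, lt_div_iff₀ hxpos]
  linarith
end

section
/- (Relaxed Cusa–Huygens-type inequality, hyperbolic case.) Let p, q be real with 0 < q and q/(q+1) < p, and let r = pq/(pq + p − q). Then for every s ∈ (0,∞), writing x = G_{p,q}(s): s/x < ( (p + r·(1 + s^q)) / (p + r) )^{1/q}. Equivalently, (sinh_{p,q} x)/x < ( (p + r·cosh_{p,q}^p x)/(p + r) )^{1/q} for all x ∈ (0, π_{r,q}/2). -/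
open MeasureTheory Real

/-!
With `a = q / (p (q + 1)) ∈ (0, 1)`, the right-hand side is `(1 + a s ^ q) ^ (1 / q)`, so the claim
is `s (1 + a s ^ q) ^ (-1 / q) < ∫₀ˢ (1 + t ^ q) ^ (-1 / p) dt`. The left-hand side vanishes at `0`
and has derivative `(1 + a s ^ q) ^ (-1 / q - 1)` (`hasDerivAt_cusa`). It therefore suffices to
compare integrands, and that comparison is Bernoulli's inequality `(1 + u) ^ a < 1 + a u` at
`u = t ^ q`, raised to the power `-(q + 1) / q` (`integrand_lt`).
-/

lemma hasDerivAt_cusa {a q t : ℝ} (ha : 0 < a) (hq : 0 < q) (ht : 0 < t) :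
    HasDerivAt (fun t : ℝ => t * (1 + a * t ^ q) ^ (-1 / q)) ((1 + a * t ^ q) ^ (-1 / q - 1)) t := by
  have hu : 0 < t ^ q := rpow_pos_of_pos ht q
  have hb : 0 < 1 + a * t ^ q := by positivity
  have h1 : HasDerivAt (fun t : ℝ => 1 + a * t ^ q) (a * (q * t ^ (q - 1))) t :=
    ((Real.hasDerivAt_rpow_const (Or.inl ht.ne')).const_mul a).const_add 1
  have h2 := (hasDerivAt_id t).mul (h1.rpow_const (p := -1 / q) (Or.inl hb.ne'))
  refine HasDerivAt.congr_deriv h2 ?_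
  have e1 : (1 + a * t ^ q) ^ (-1 / q) = (1 + a * t ^ q) ^ (-1 / q - 1) * (1 + a * t ^ q) := by
    rw [rpow_sub_one hb.ne']
    field_simp
  have e2 : t ^ (q - 1) = t ^ q / t := rpow_sub_one ht.ne' q
  rw [id_eq, e1, e2]
  field_simp
  ring

lemma integrand_lt {p q t : ℝ} (hq : 0 < q) (hp0 : 0 < p) (ha1 : q / (p * (q + 1)) < 1)
    (ht : 0 < t) :
    (1 + q / (p * (q + 1)) * t ^ q) ^ (-1 / q - 1) < (1 + t ^ q) ^ (-1 / p) := by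
  have hu : 0 < t ^ q := rpow_pos_of_pos ht q
  have ha : 0 < q / (p * (q + 1)) := by positivity
  have hB := rpow_one_add_lt_one_add_mul_self (by linarith : -1 ≤ t ^ q) hu.ne' ha ha1
  have hneg : -1 / q - 1 < 0 := by
    have : 0 < 1 / q := by positivity
    rw [neg_div]
    linarith
  have h := rpow_lt_rpow_of_neg (by positivity) hB hneg
  rw [← rpow_mul (by positivity)] at h
  convert h using 2
  field_simp
  ring

theorem cusa_huygens_hyp (p q r : ℝ) (hq : 0 < q) (hp : q / (q + 1) < p)
    (hr : r = p * q / (p * q + p - q)) :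
    ∀ s : ℝ, 0 < s →
      s / (∫ t in (0:ℝ)..s, (1 + t ^ q) ^ (-1 / p))
        < ((p + r * (1 + s ^ q)) / (p + r)) ^ (1 / q) := by
  intro s hs
  have hp0 : 0 < p := lt_trans (by positivity) hp
  have hD : 0 < p * q + p - q := by
    rw [div_lt_iff₀ (by positivity)] at hp
    linarith
  have ha1 : q / (p * (q + 1)) < 1 := by
    rw [div_lt_one (by positivity)]
    linarith
  have hr0 : 0 < r := by rw [hr]; positivity
  have har : r / (p + r) = q / (p * (q + 1)) := by
    have h1 : r * (p * q + p - q) = p * q := by rw [hr, div_mul_cancel₀ _ hD.ne']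
    rw [div_eq_div_iff (by positivity) (by positivity)]
    linarith
  have hR : (p + r * (1 + s ^ q)) / (p + r) = 1 + q / (p * (q + 1)) * s ^ q := by
    rw [← har]
    field_simp
    ring
  rw [hR]
  have ha : 0 < q / (p * (q + 1)) := by positivity
  have hlt := fun t (ht : 0 < t) => integrand_lt hq hp0 ha1 (t := t) ht
  generalize q / (p * (q + 1)) = a at *
  have hcq : ContinuousOn (fun t : ℝ => t ^ q) (Set.Icc 0 s) :=
    (Real.continuous_rpow_const hq.le).continuousOn
  have hb : ∀ t ∈ Set.Icc 0 s, 0 < 1 + a * t ^ q := fun t ht => by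
    have := rpow_nonneg ht.1 q
    positivity
  have hc (e : ℝ) : ContinuousOn (fun t : ℝ => (1 + a * t ^ q) ^ e) (Set.Icc 0 s) :=
    (continuousOn_const.add (continuousOn_const.mul hcq)).rpow_const
      fun t ht => Or.inl (hb t ht).ne'
  have hc' : ContinuousOn (fun t : ℝ => (1 + t ^ q) ^ (-1 / p)) (Set.Icc 0 s) :=
    (continuousOn_const.add hcq).rpow_const fun t ht =>
      Or.inl (add_pos_of_pos_of_nonneg one_pos (rpow_nonneg ht.1 q)).ne'
  have hint : ∫ t in (0:ℝ)..s, (1 + a * t ^ q) ^ (-1 / q - 1) = s * (1 + a * s ^ q) ^ (-1 / q) := by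
    rw [intervalIntegral.integral_eq_sub_of_hasDerivAt_of_le hs.le
      (continuousOn_id.mul (hc (-1 / q))) (fun t ht => hasDerivAt_cusa ha hq ht.1)
      (ContinuousOn.intervalIntegrable_of_Icc hs.le (hc _))]
    simp
  have hmain := intervalIntegral.integral_lt_integral_of_continuousOn_of_le_of_exists_lt hs
    (hc (-1 / q - 1)) hc' (fun t ht => (hlt t ht.1).le) ⟨s, ⟨hs.le, le_rfl⟩, hlt s hs⟩
  rw [hint] at hmain
  have hbs := hb s ⟨hs.le, le_rfl⟩
  have hP : 0 < (1 + a * s ^ q) ^ (1 / q) := rpow_pos_of_pos hbs _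
  rw [neg_div, rpow_neg hbs.le, ← div_eq_mul_inv] at hmain
  have hI := lt_trans (div_pos hs hP) hmain
  rw [div_lt_iff₀ hI]
  rw [div_lt_iff₀ hP] at hmain
  linarith
end

section
/- (Key substitution identity behind Theorem 4.1.) Let q be real with 0 < q, and set R = 2q/(2+q). Then for every y ∈ [0,∞): G_{2,q}(y) = 2^{−2/q} · F_{R, q/2}( 2^{2/q}·y / ( y^{q/2} + (1 + y^q)^{1/2} )^{2/q} ), i.e. ∫_0^y (1+t^q)^{−1/2} dt = 2^{−2/q} ∫_0^{u(y)} (1 − s^{q/2})^{−1/R} ds with u(y) = 2^{2/q} y / (y^{q/2} + √(1+y^q))^{2/q}. -/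
open MeasureTheory Real

/-!
The identity is a change of variables. Put `p = q / 2`, `x = t ^ p`, `w = √(1 + x ^ 2)`, and
`u(t) = 2 ^ (1 / p) * t * (x + w) ^ (-1 / p)`. Since `(w - x) * (w + x) = 1`, one has
`1 - u ^ p = (w - x) / (w + x) = (x + w) ^ (-2)` (`one_sub_substU_rpow`), and the logarithmic
derivative `u' / u = (1 - x / w) / t` gives `u' = 2 ^ (1 / p) * (x + w) ^ (-1 / p - 1) / w`
(`hasDerivAt_substU`). As `1 / R = 1 / (2 * p) + 1 / 2`, the powers of `x + w` cancel in
`(1 - u ^ p) ^ (-1 / R) * u' = 2 ^ (1 / p) / w`, and `w = (1 + t ^ q) ^ (1 / 2)`. The function `u`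
is continuous up to `t = 0`, where `u = 0`, so substitution applies on all of `[0, y]`.
-/

/-- The quantity `x + w = t ^ p + √(1 + t ^ (2 * p))`. -/
noncomputable def substA (p t : ℝ) : ℝ := t ^ p + √(1 + (t ^ p) ^ 2)

/-- The substitution `u(t) = 2 ^ (1 / p) * t * (t ^ p + √(1 + t ^ (2 * p))) ^ (-1 / p)`. -/
noncomputable def substU (p t : ℝ) : ℝ := 2 ^ (1 / p) * t * substA p t ^ (-(1 / p))

lemma substA_pos (p : ℝ) {t : ℝ} (ht : 0 ≤ t) : 0 < substA p t := by
  unfold substA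
  positivity

lemma continuousOn_substA {p : ℝ} (hp : 0 < p) (s : Set ℝ) : ContinuousOn (substA p) s := by
  have h : Continuous fun t : ℝ => t ^ p := Real.continuous_rpow_const hp.le
  unfold substA
  fun_prop

lemma one_sub_substU_rpow {p t : ℝ} (hp : 0 < p) (ht : 0 ≤ t) :
    1 - substU p t ^ p = substA p t ^ (-2 : ℝ) := by
  have hA := substA_pos p ht
  have h1 : substU p t ^ p = 2 * t ^ p * (substA p t)⁻¹ := by
    unfold substU
    rw [mul_rpow (by positivity) (by positivity), mul_rpow (by positivity) ht,
      ← rpow_mul (by norm_num), ← rpow_mul hA.le, one_div_mul_cancel hp.ne', neg_mul,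
      one_div_mul_cancel hp.ne', rpow_one, rpow_neg_one]
  rw [h1, rpow_neg hA.le, rpow_two]
  field_simp
  have hw := Real.sq_sqrt (show (0 : ℝ) ≤ 1 + (t ^ p) ^ 2 by positivity)
  unfold substA
  linear_combination hw

lemma hasDerivAt_substU {p t : ℝ} (hp : 0 < p) (ht : 0 < t) :
    HasDerivAt (substU p)
      (2 ^ (1 / p) * substA p t ^ (-(1 / p) - 1) / √(1 + (t ^ p) ^ 2)) t := by
  have hA := substA_pos p ht.le
  have hx : HasDerivAt (fun t : ℝ => t ^ p) (p * t ^ (p - 1)) t :=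
    Real.hasDerivAt_rpow_const (Or.inl ht.ne')
  have hw : HasDerivAt (fun t : ℝ => √(1 + (t ^ p) ^ 2)) _ t :=
    ((hx.pow 2).const_add 1).sqrt (show 1 + (t ^ p) ^ 2 ≠ 0 by positivity)
  have hA' : HasDerivAt (substA p) _ t := hx.add hw
  have hU := ((hasDerivAt_id t).const_mul ((2 : ℝ) ^ (1 / p))).mul
    (hA'.rpow_const (p := -(1 / p)) (Or.inl hA.ne'))
  refine hU.congr_deriv ?_
  have hsplit : substA p t ^ (-(1 / p)) = substA p t ^ (-(1 / p) - 1) * substA p t := by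
    rw [← rpow_add_one hA.ne', sub_add_cancel]
  have hx1 : t ^ (p - 1) = t ^ p / t := by rw [rpow_sub_one ht.ne']
  have hwsq := Real.sq_sqrt (show (0 : ℝ) ≤ 1 + (t ^ p) ^ 2 by positivity)
  have hwpos : 0 < √(1 + (t ^ p) ^ 2) := by positivity
  rw [hsplit, hx1]
  generalize substA p t ^ (-(1 / p) - 1) = B
  generalize (2 : ℝ) ^ (1 / p) = c
  simp only [substA, id]
  generalize √(1 + (t ^ p) ^ 2) = w at *
  generalize t ^ p = x at *
  field_simp
  push_cast
  linear_combination 2 * c * B * hwsq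

/-- Key substitution identity behind Theorem 4.1: for `0 < q` and
`R = 2q/(2+q)`, for every `y ∈ [0,∞)`,
`∫_0^y (1+t^q)^{-1/2} dt = 2^{-2/q} ∫_0^{u(y)} (1 - s^{q/2})^{-1/R} ds` with
`u(y) = 2^{2/q}·y/(y^{q/2} + √(1+y^q))^{2/q}`. -/
theorem substitution_identity (q R : ℝ) (hq : 0 < q) (hR : R = 2 * q / (2 + q)) :
    ∀ y : ℝ, 0 ≤ y →
      (∫ t in (0:ℝ)..y, (1 + t ^ q) ^ (-1 / (2:ℝ)))
        = 2 ^ (-2 / q) *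
          ∫ s in (0:ℝ)..((2:ℝ) ^ (2 / q) * y / (y ^ (q / 2) + (1 + y ^ q) ^ ((1:ℝ)/2)) ^ (2 / q)),
            (1 - s ^ (q / 2)) ^ (-1 / R) := by
  intro y hy
  obtain ⟨p, rfl⟩ : ∃ p, q = 2 * p := ⟨q / 2, by ring⟩
  have hp : 0 < p := by linarith
  have e1 : 2 / (2 * p) = 1 / p := by field_simp
  have e2 : 2 * p / 2 = p := by ring
  have e3 : -2 / (2 * p) = -(1 / p) := by field_simp
  have e4 : -1 / R = -(1 / p + 1) / 2 := by rw [hR]; field_simp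
  have hsq : ∀ t : ℝ, 0 ≤ t → t ^ (2 * p) = (t ^ p) ^ 2 := fun t ht => by
    rw [mul_comm, rpow_mul ht, rpow_two]
  have hend : (2:ℝ) ^ (2 / (2 * p)) * y /
      (y ^ (2 * p / 2) + (1 + y ^ (2 * p)) ^ ((1:ℝ)/2)) ^ (2 / (2 * p)) = substU p y := by
    rw [e1, e2, hsq y hy, ← Real.sqrt_eq_rpow, substU, rpow_neg (substA_pos p hy).le,
      ← div_eq_mul_inv, substA]
  rw [hend, e2, e3, e4]
  have hnn : ∀ t ∈ Set.uIcc 0 y, 0 ≤ t := fun t ht => by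
    rw [Set.uIcc_of_le hy] at ht; exact ht.1
  have hcx : Continuous fun t : ℝ => t ^ p := Real.continuous_rpow_const hp.le
  have hcA := continuousOn_substA hp (Set.uIcc 0 y)
  have hcpow : ∀ r : ℝ, ContinuousOn (fun t => substA p t ^ r) (Set.uIcc 0 y) := fun r =>
    hcA.rpow_const fun t ht => Or.inl (substA_pos p (hnn t ht)).ne'
  have key := intervalIntegral.integral_comp_mul_deriv'' (a := 0) (b := y) (f := substU p)
    (f' := fun t => 2 ^ (1 / p) * substA p t ^ (-(1 / p) - 1) / √(1 + (t ^ p) ^ 2))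
    (g := fun s => (1 - s ^ p) ^ (-(1 / p + 1) / 2))
    ((continuousOn_const.mul continuousOn_id).mul (hcpow _))
    (fun t ht => (hasDerivAt_substU hp (by
      rw [min_eq_left hy] at ht; exact ht.1)).hasDerivWithinAt)
    ((continuousOn_const.mul (hcpow _)).div (by fun_prop) (fun t _ => by positivity))
    (by
      -- On the range of `substU` the base `1 - s ^ p` is a power of `substA`, hence nonzero.
      refine ContinuousOn.rpow_const (by fun_prop) ?_
      rintro _ ⟨t, ht, rfl⟩
      left
      rw [one_sub_substU_rpow hp (hnn t ht)]
      exact (rpow_pos_of_pos (substA_pos p (hnn t ht)) _).ne')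
  have h0 : substU p 0 = 0 := by simp [substU]
  rw [h0] at key
  rw [← key, ← intervalIntegral.integral_const_mul]
  refine intervalIntegral.integral_congr fun t ht => ?_
  have ht0 := hnn t ht
  have hA := substA_pos p ht0
  simp only [Function.comp]
  rw [one_sub_substU_rpow hp ht0, hsq t ht0, ← rpow_mul hA.le, neg_div, rpow_neg (by positivity),
    ← Real.sqrt_eq_rpow, rpow_neg (by norm_num)]
  have hcancel : substA p t ^ (-2 * (-(1 / p + 1) / 2)) * substA p t ^ (-(1 / p) - 1) = 1 := by
    rw [← rpow_add hA, ← rpow_zero (substA p t)]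
    congr 1
    ring
  have hc : (0 : ℝ) < 2 ^ (1 / p) := by positivity
  have hw : 0 < √(1 + (t ^ p) ^ 2) := by positivity
  generalize (2 : ℝ) ^ (1 / p) = c at *
  generalize substA p t ^ (-2 * (-(1 / p + 1) / 2)) = B at *
  generalize substA p t ^ (-(1 / p) - 1) = D at *
  field_simp
  linear_combination -hcancel
end

section
/- (Half-period relation in Theorem 4.1.) Let q be real with 0 < q, and set R = 2q/(2+q). Then π_{R,q}/2 = π_{R,q/2}/2^{2/q+1}; that is, ∫_0^1 (1 − t^q)^{−(2+q)/(2q)} dt = 2^{−2/q} · ∫_0^1 (1 − t^{q/2})^{−(2+q)/(2q)} dt. -/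
open MeasureTheory Real

/-!
Write `p = q / 2`. The substitution `s = φ t = 2 ^ (1/p) * t * (1 + t ^ p) ^ (-1/p)`, which in the
variables `a = t ^ p`, `b = s ^ p` is the quadratic transformation `b = 2 a / (1 + a)`, is a
bijection of `(0, 1)` onto itself, with `1 - b = (1 - a) / (1 + a)` and
`φ' t = 2 ^ (1/p) * (1 + a) ^ (-1/p - 1)`. Since `1 / R = 1 / (2 p) + 1 / 2`, it turns
`(1 - b) ^ (-1/R) ds` into `2 ^ (1/p) * (1 - a ^ 2) ^ (-1/R) dt`.

The change of variables formula for the Bochner integral along an injective differentiable map needs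
no integrability, so the argument also covers `q ≤ 2`, where both integrals diverge.
-/

/-- The substitution relating the two half-period integrals; in terms of `p`-th powers it is
`a ↦ 2 a / (1 + a)`. -/
noncomputable def halfPeriodSubst (p t : ℝ) : ℝ :=
  2 ^ (1 / p) * (t * (1 + t ^ p) ^ (-1 / p))

lemma halfPeriodSubst_pos {p t : ℝ} (ht : 0 < t) : 0 < halfPeriodSubst p t := by
  unfold halfPeriodSubst
  positivity

lemma halfPeriodSubst_rpow {p t : ℝ} (hp : 0 < p) (ht : 0 < t) :
    halfPeriodSubst p t ^ p = 2 * t ^ p / (1 + t ^ p) := by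
  have h1 : 0 < 1 + t ^ p := by positivity
  unfold halfPeriodSubst
  rw [mul_rpow (by positivity) (by positivity), mul_rpow ht.le (by positivity),
    ← rpow_mul (by norm_num), ← rpow_mul h1.le, div_mul_cancel₀ _ hp.ne',
    div_mul_cancel₀ _ hp.ne', rpow_one, rpow_neg_one]
  ring

lemma hasDerivAt_halfPeriodSubst {p t : ℝ} (hp : 0 < p) (ht : 0 < t) :
    HasDerivAt (halfPeriodSubst p) (2 ^ (1 / p) * (1 + t ^ p) ^ (-1 / p - 1)) t := by
  have h1 : 0 < 1 + t ^ p := by positivity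
  have hd : HasDerivAt (fun x : ℝ => 1 + x ^ p) (p * t ^ (p - 1)) t :=
    (hasDerivAt_rpow_const (Or.inl ht.ne')).const_add 1
  have h := ((hasDerivAt_id t).mul (hd.rpow_const (p := -1 / p) (Or.inl h1.ne'))).const_mul
    ((2 : ℝ) ^ (1 / p))
  refine h.congr_deriv ?_
  have e1 : (1 + t ^ p) ^ (-1 / p) = (1 + t ^ p) ^ (-1 / p - 1) * (1 + t ^ p) := by
    rw [rpow_sub_one h1.ne']
    field_simp
  have e2 : t ^ p = t ^ (p - 1) * t := by
    rw [rpow_sub_one ht.ne']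
    field_simp
  simp only [id]
  rw [e1]
  generalize (1 + t ^ p) ^ (-1 / p - 1) = c
  rw [e2]
  field_simp
  ring

lemma injOn_halfPeriodSubst {p : ℝ} (hp : 0 < p) :
    Set.InjOn (halfPeriodSubst p) (Set.Ioo 0 1) := by
  intro x hx y hy hxy
  have h := congrArg (fun z : ℝ => z ^ p) hxy
  simp only [halfPeriodSubst_rpow hp hx.1, halfPeriodSubst_rpow hp hy.1] at h
  have hx' : 0 < x ^ p := rpow_pos_of_pos hx.1 p
  have hy' : 0 < y ^ p := rpow_pos_of_pos hy.1 p
  rw [div_eq_div_iff (by positivity) (by positivity)] at h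
  exact (rpow_left_inj hx.1.le hy.1.le hp.ne').1 (by linarith)

lemma image_halfPeriodSubst {p : ℝ} (hp : 0 < p) :
    halfPeriodSubst p '' Set.Ioo 0 1 = Set.Ioo 0 1 := by
  ext s
  constructor
  · rintro ⟨t, ht, rfl⟩
    refine ⟨halfPeriodSubst_pos ht.1, ?_⟩
    have h0 : 0 < t ^ p := rpow_pos_of_pos ht.1 p
    have h1 : t ^ p < 1 := rpow_lt_one ht.1.le ht.2 hp
    rw [← rpow_lt_rpow_iff (halfPeriodSubst_pos ht.1).le zero_le_one hp,
      halfPeriodSubst_rpow hp ht.1, one_rpow, div_lt_one (by positivity)]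
    linarith
  · intro hs
    have h0 : 0 < s ^ p := rpow_pos_of_pos hs.1 p
    have h1 : s ^ p < 1 := rpow_lt_one hs.1.le hs.2 hp
    have h2 : 0 < 2 - s ^ p := by linarith
    have ha : 0 < s ^ p / (2 - s ^ p) := by positivity
    -- The inverse of `a ↦ 2 a / (1 + a)` is `b ↦ b / (2 - b)`.
    have ht : 0 < (s ^ p / (2 - s ^ p)) ^ (1 / p) := rpow_pos_of_pos ha _
    refine ⟨(s ^ p / (2 - s ^ p)) ^ (1 / p), ⟨ht, ?_⟩, ?_⟩
    · refine rpow_lt_one ha.le ?_ (by positivity)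
      rw [div_lt_one h2]
      linarith
    · rw [← rpow_left_inj (halfPeriodSubst_pos ht).le hs.1.le hp.ne', halfPeriodSubst_rpow hp ht,
        ← rpow_mul ha.le, div_mul_cancel₀ _ hp.ne', rpow_one]
      field_simp
      ring

/-- Half-period relation in Theorem 4.1: for `0 < q` and `R = 2q/(2+q)`,
`π_{R,q}/2 = π_{R,q/2}/2^{2/q+1}`; that is,
`∫_0^1 (1 - t^q)^{-1/R} dt = 2^{-2/q} · ∫_0^1 (1 - t^{q/2})^{-1/R} dt`. -/
theorem half_period_relation (q R : ℝ) (hq : 0 < q) (hR : R = 2 * q / (2 + q)) :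
    (∫ t in (0:ℝ)..1, (1 - t ^ q) ^ (-1 / R))
      = 2 ^ (-2 / q) * ∫ t in (0:ℝ)..1, (1 - t ^ (q / 2)) ^ (-1 / R) := by
  obtain ⟨p, rfl⟩ : ∃ p, q = 2 * p := ⟨q / 2, by ring⟩
  have hp : 0 < p := by linarith
  rw [show 2 * p / 2 = p by ring, show -2 / (2 * p) = -(1 / p) by field_simp]
  have hRp : -1 / R = (-1 / p - 1) / 2 := by
    rw [hR]
    field_simp
    ring
  rw [hRp]
  generalize he : (-1 / p - 1) / 2 = e
  rw [intervalIntegral.integral_of_le zero_le_one, intervalIntegral.integral_of_le zero_le_one,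
    integral_Ioc_eq_integral_Ioo, integral_Ioc_eq_integral_Ioo]
  have key := integral_image_eq_integral_abs_deriv_smul (measurableSet_Ioo (a := (0:ℝ)) (b := 1))
    (fun t ht => (hasDerivAt_halfPeriodSubst hp ht.1).hasDerivWithinAt)
    (injOn_halfPeriodSubst hp) (fun s : ℝ => (1 - s ^ p) ^ e)
  rw [image_halfPeriodSubst hp] at key
  rw [key, ← integral_const_mul]
  refine setIntegral_congr_fun measurableSet_Ioo fun t ht => ?_
  have h0 : 0 < t ^ p := rpow_pos_of_pos ht.1 p
  have h1 : t ^ p < 1 := rpow_lt_one ht.1.le ht.2 hp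
  have h2 : 0 < 1 + t ^ p := by positivity
  have h3 : 0 < 1 - t ^ p := by linarith
  have hsq : t ^ (2 * p) = t ^ p * t ^ p := by
    rw [two_mul, rpow_add ht.1]
  have hfac : 1 - t ^ (2 * p) = (1 - t ^ p) * (1 + t ^ p) := by
    rw [hsq]
    ring
  have hfrac : 1 - 2 * t ^ p / (1 + t ^ p) = (1 - t ^ p) / (1 + t ^ p) := by
    field_simp
    ring
  have hexp : -1 / p - 1 = e + e := by
    rw [← he]
    ring
  simp only [smul_eq_mul]
  rw [abs_of_pos (by positivity), halfPeriodSubst_rpow hp ht.1, hfrac, hfac,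
    mul_rpow h3.le h2.le, div_rpow h3.le h2.le, hexp, rpow_add h2, rpow_neg zero_le_two]
  have h4 : (1 + t ^ p) ^ e ≠ 0 := (rpow_pos_of_pos h2 e).ne'
  have h5 : (2 : ℝ) ^ (1 / p) ≠ 0 := (rpow_pos_of_pos two_pos _).ne'
  field_simp
end

section
/- (Multiple-angle formula of Theorem 4.1, trigonometric case.) Let q be real with 0 < q, and set R = 2q/(2+q). Then for every y ∈ [0,1): F_{R, q/2}( 2^{2/q}·y / (1 + y^{q/2})^{2/q} ) = 2^{2/q} · F_{R,q}(y). Equivalently, for x ∈ [0, π_{R,q}/2), sin_{R,q/2}(2^{2/q} x) = 2^{2/q}·sin_{R,q} x / (1 + sin_{R,q}^{q/2} x)^{2/q}. -/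
/-!
The identity is the substitution `s = φ(t) = 2^(2/q) t / (1 + t^(q/2))^(2/q)`. With `u = t^(q/2)`
one has `1 - φ(t)^(q/2) = (1 - u) / (1 + u)` (`one_sub_angleMap_rpow`) and
`φ'(t) = 2^(2/q) (1 + u)^(-2/q - 1) = 2^(2/q) (1 + u)^(-2/R)` (`hasDerivAt_angleMap`), since
`1/R = 1/q + 1/2`. Hence
`(1 - φ(t)^(q/2))^(-1/R) φ'(t) = 2^(2/q) ((1 - u)(1 + u))^(-1/R) = 2^(2/q) (1 - t^q)^(-1/R)`.
As `y < 1`, every function involved is continuous on the closed interval `[0, y]`.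
-/

open MeasureTheory Real

/-- The substitution `t ↦ 2^(2/q) t / (1 + t^(q/2))^(2/q)` behind the multiple-angle formula. -/
noncomputable def angleMap (q t : ℝ) : ℝ :=
  (2:ℝ) ^ (2 / q) * t / (1 + t ^ (q / 2)) ^ (2 / q)

lemma one_sub_angleMap_rpow {q t : ℝ} (hq : 0 < q) (ht : 0 ≤ t) :
    1 - angleMap q t ^ (q / 2) = (1 - t ^ (q / 2)) / (1 + t ^ (q / 2)) := by
  have hu : 0 ≤ t ^ (q / 2) := by positivity
  have hinv : 2 / q * (q / 2) = 1 := by field_simp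
  unfold angleMap
  rw [div_rpow (by positivity) (by positivity), mul_rpow (by positivity) ht,
    ← rpow_mul (by norm_num), ← rpow_mul (by positivity), hinv, rpow_one, rpow_one]
  field_simp
  ring

lemma continuousOn_angleMap {q : ℝ} (hq : 0 < q) : ContinuousOn (angleMap q) (Set.Ici 0) := by
  have hc : Continuous fun t : ℝ => t ^ (q / 2) := continuous_rpow_const (by positivity)
  have hpos : ∀ t ∈ Set.Ici (0:ℝ), 0 < 1 + t ^ (q / 2) := fun t ht => by
    have : 0 ≤ t ^ (q / 2) := rpow_nonneg ht _
    positivity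
  unfold angleMap
  refine ContinuousOn.div (by fun_prop) ?_ fun t ht => (rpow_pos_of_pos (hpos t ht) _).ne'
  exact ContinuousOn.rpow_const (by fun_prop) fun t ht => Or.inl (hpos t ht).ne'

lemma hasDerivAt_angleMap {q t : ℝ} (hq : 0 < q) (ht : 0 < t) :
    HasDerivAt (angleMap q) ((2:ℝ) ^ (2 / q) * (1 + t ^ (q / 2)) ^ (-(2 / q) - 1)) t := by
  have hu : 0 < t ^ (q / 2) := by positivity
  have hpos : 0 < 1 + t ^ (q / 2) := by positivity
  have h1 : HasDerivAt (fun t : ℝ => 1 + t ^ (q / 2)) (q / 2 * t ^ (q / 2 - 1)) t :=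
    (hasDerivAt_rpow_const (Or.inl ht.ne')).const_add 1
  have h2 := h1.rpow_const (p := 2 / q) (Or.inl hpos.ne')
  have h3 := ((hasDerivAt_id t).const_mul ((2:ℝ) ^ (2 / q))).div h2 (by positivity)
  refine h3.congr_deriv ?_
  simp only [id]
  rw [rpow_sub_one hpos.ne', rpow_sub_one hpos.ne', rpow_sub_one ht.ne', rpow_neg hpos.le]
  field_simp
  ring

/-- The integrand identity, including the endpoint `t = 0`. -/
lemma angleMap_integrand {q R t : ℝ} (hq : 0 < q) (hR : R = 2 * q / (2 + q))
    (ht : 0 ≤ t) (ht1 : t < 1) :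
    (1 - angleMap q t ^ (q / 2)) ^ (-1 / R) *
        ((2:ℝ) ^ (2 / q) * (1 + t ^ (q / 2)) ^ (-(2 / q) - 1))
      = 2 ^ (2 / q) * (1 - t ^ q) ^ (-1 / R) := by
  have hu : 0 ≤ t ^ (q / 2) := by positivity
  have hu1 : t ^ (q / 2) < 1 := rpow_lt_one ht ht1 (by positivity)
  have hsq : t ^ q = t ^ (q / 2) * t ^ (q / 2) := by
    rw [← rpow_add_of_nonneg ht (by positivity) (by positivity), add_halves]
  have hexp : -(2 / q) - 1 = -1 / R + -1 / R := by
    rw [hR]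
    field_simp
    ring
  rw [one_sub_angleMap_rpow hq ht, hsq, hexp]
  generalize t ^ (q / 2) = u at *
  have hpos : 0 < 1 + u := by positivity
  have hne : (1 + u) ^ (-1 / R) ≠ 0 := (rpow_pos_of_pos hpos _).ne'
  rw [show 1 - u * u = (1 - u) * (1 + u) by ring, div_rpow (by linarith) hpos.le,
    mul_rpow (by linarith) hpos.le, rpow_add hpos]
  field_simp

/-- Multiple-angle formula of Theorem 4.1, trigonometric case: for `0 < q` and
`R = 2q/(2+q)`, for every `y ∈ [0,1)`,
`F_{R,q/2}(2^{2/q}·y/(1 + y^{q/2})^{2/q}) = 2^{2/q} · F_{R,q}(y)`. Equivalently,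
`sin_{R,q/2}(2^{2/q} x) = 2^{2/q}·sin_{R,q} x / (1 + sin_{R,q}^{q/2} x)^{2/q}`
for `x ∈ [0, π_{R,q}/2)`. -/
theorem multiple_angle_trig (q R : ℝ) (hq : 0 < q) (hR : R = 2 * q / (2 + q)) :
    ∀ y : ℝ, 0 ≤ y → y < 1 →
      (∫ s in (0:ℝ)..((2:ℝ) ^ (2 / q) * y / (1 + y ^ (q / 2)) ^ (2 / q)),
          (1 - s ^ (q / 2)) ^ (-1 / R))
        = 2 ^ (2 / q) * ∫ t in (0:ℝ)..y, (1 - t ^ q) ^ (-1 / R) := by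
  intro y hy hy1
  have hc : Continuous fun t : ℝ => t ^ (q / 2) := continuous_rpow_const (by positivity)
  have h0 : angleMap q 0 = 0 := by simp [angleMap]
  have hsub := intervalIntegral.integral_comp_mul_deriv'' (a := 0) (b := y) (f := angleMap q)
    (f' := fun t => (2:ℝ) ^ (2 / q) * (1 + t ^ (q / 2)) ^ (-(2 / q) - 1))
    (g := fun s => (1 - s ^ (q / 2)) ^ (-1 / R))
    ((continuousOn_angleMap hq).mono (by rw [Set.uIcc_of_le hy]; exact fun t ht => ht.1))
    (by
      rw [min_eq_left hy, max_eq_right hy]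
      exact fun t ht => (hasDerivAt_angleMap hq ht.1).hasDerivWithinAt)
    (by
      rw [Set.uIcc_of_le hy]
      refine continuousOn_const.mul (ContinuousOn.rpow_const (by fun_prop) fun t ht => Or.inl ?_)
      have : 0 ≤ t ^ (q / 2) := rpow_nonneg ht.1 _
      positivity)
    (by
      rw [Set.uIcc_of_le hy]
      refine ContinuousOn.rpow_const (by fun_prop) ?_
      -- The base stays away from `0` on the image because `t ≤ y < 1`.
      rintro _ ⟨t, ht, rfl⟩
      left
      rw [one_sub_angleMap_rpow hq ht.1]
      have hu : 0 ≤ t ^ (q / 2) := rpow_nonneg ht.1 _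
      have hu1 : t ^ (q / 2) < 1 := rpow_lt_one ht.1 (ht.2.trans_lt hy1) (by positivity)
      have : 0 < 1 - t ^ (q / 2) := by linarith
      positivity)
  rw [h0] at hsub
  change ∫ s in (0:ℝ)..angleMap q y, (1 - s ^ (q / 2)) ^ (-1 / R) = _
  rw [← hsub, ← intervalIntegral.integral_const_mul]
  refine intervalIntegral.integral_congr fun t ht => ?_
  rw [Set.uIcc_of_le hy] at ht
  exact angleMap_integrand hq hR ht.1 (ht.2.trans_lt hy1)
end

section
/- (Multiple-angle formula of Theorem 4.1, hyperbolic case.) Let q be real with 0 < q, and set R = 2q/(2+q). Then for every s ∈ [0,∞): G_{R, q/2}( 2^{2/q}·s·( (1 + s^q)^{1/2} + s^{q/2} )^{2/q} ) = 2^{2/q} · G_{2,q}(s). Equivalently, for x ∈ [0, π_{R,q}/2), sinh_{R,q/2}(2^{2/q} x) = 2^{2/q}·sinh_{2,q} x·( cosh_{2,q} x + sinh_{2,q}^{q/2} x )^{2/q}, where cosh_{2,q} x = (1 + sinh_{2,q}^q x)^{1/2}. -/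
open MeasureTheory Real

/-!
The formula is the change of variables `u = φ(t)` with
`φ(t) = 2^(2/q) * t * (c + w)^(2/q)`, where `w = t^(q/2)` and `c = (1 + t^q)^(1/2)`.
Since `c^2 = 1 + w^2`, one has `1 + φ(t)^(q/2) = 1 + 2*w*(c + w) = (c + w)^2`
(`one_add_phi_rpow`), and differentiating gives
`φ'(t) = 2^(2/q) * (c + w)^(2/q + 1) / c` (`hasDerivAt_phi`).
As `1/R = 1/q + 1/2`, the transformed integrand collapses to `2^(2/q) / c`.
-/

/-- The factor `c + w = (1 + t^q)^(1/2) + t^(q/2)`, i.e. `cosh + sinh^(q/2)` at `sinh = t`. -/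
noncomputable def cw (q t : ℝ) : ℝ := (1 + t ^ q) ^ ((1:ℝ)/2) + t ^ (q / 2)

/-- The substitution `t ↦ 2^(2/q) * t * (c + w)^(2/q)`. -/
noncomputable def phi (q t : ℝ) : ℝ := (2:ℝ) ^ (2 / q) * t * (cw q t) ^ (2 / q)

lemma cw_pos {q t : ℝ} (ht : 0 ≤ t) : 0 < cw q t := by
  unfold cw; positivity

lemma phi_nonneg {q t : ℝ} (ht : 0 ≤ t) : 0 ≤ phi q t := by
  have := cw_pos (q := q) ht
  unfold phi; positivity

lemma half_rpow_sq {q t : ℝ} (ht : 0 ≤ t) : (t ^ (q / 2)) ^ 2 = t ^ q := by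
  rw [← Real.rpow_natCast, ← Real.rpow_mul ht]
  congr 1; push_cast; ring

lemma cosh_sq {q t : ℝ} (ht : 0 ≤ t) : ((1 + t ^ q) ^ ((1:ℝ)/2)) ^ 2 = 1 + t ^ q := by
  rw [← Real.sqrt_eq_rpow, Real.sq_sqrt]
  positivity

lemma one_add_phi_rpow {q t : ℝ} (hq : 0 < q) (ht : 0 ≤ t) :
    1 + phi q t ^ (q / 2) = cw q t ^ 2 := by
  have hc := cw_pos (q := q) ht
  have e : 2 / q * (q / 2) = 1 := by field_simp
  have h : phi q t ^ (q / 2) = 2 * t ^ (q / 2) * cw q t := by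
    unfold phi
    rw [Real.mul_rpow (by positivity) (by positivity), Real.mul_rpow (by positivity) ht,
      ← Real.rpow_mul (by norm_num), ← Real.rpow_mul hc.le, e, Real.rpow_one, Real.rpow_one]
  rw [h]
  unfold cw
  have h1 := half_rpow_sq (q := q) ht
  have h2 := cosh_sq (q := q) ht
  linear_combination h1 - h2

lemma hasDerivAt_phi {q t : ℝ} (hq : 0 < q) (ht : 0 < t) :
    HasDerivAt (phi q)
      (2 ^ (2 / q) * cw q t ^ (2 / q + 1) / (1 + t ^ q) ^ ((1:ℝ)/2)) t := by
  have hc := cw_pos (q := q) ht.le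
  have hb : 0 < 1 + t ^ q := by positivity
  set c := (1 + t ^ q) ^ ((1:ℝ)/2) with hcdef
  set w := t ^ (q / 2) with hwdef
  have hcpos : 0 < c := by positivity
  have d1 : HasDerivAt (fun t : ℝ => t ^ q) (q * t ^ (q - 1)) t :=
    Real.hasDerivAt_rpow_const (Or.inl ht.ne')
  have d2 : HasDerivAt (fun t : ℝ => t ^ (q / 2)) (q / 2 * t ^ (q / 2 - 1)) t :=
    Real.hasDerivAt_rpow_const (Or.inl ht.ne')
  have d3 := (d1.const_add 1).rpow_const (p := (1:ℝ)/2) (Or.inl hb.ne')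
  have d4 : HasDerivAt (cw q) (q / 2 * w / t * cw q t / c) t := by
    refine (d3.add d2).congr_deriv ?_
    have e1 : (1 + t ^ q) ^ ((1:ℝ)/2 - 1) = c / c ^ 2 := by
      rw [Real.rpow_sub hb, Real.rpow_one, cosh_sq ht.le]
    rw [e1, Real.rpow_sub ht, Real.rpow_sub ht, Real.rpow_one, ← half_rpow_sq ht.le]
    unfold cw
    rw [← hcdef, ← hwdef]
    field_simp
    ring
  have d5 := ((hasDerivAt_id t).const_mul ((2:ℝ) ^ (2 / q))).mul
    (d4.rpow_const (p := 2 / q) (Or.inl hc.ne'))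
  refine d5.congr_deriv ?_
  rw [Real.rpow_sub hc, Real.rpow_add hc, Real.rpow_one]
  have hcw : cw q t = c + w := rfl
  simp only [id]
  field_simp
  rw [hcw]

lemma continuousOn_cw {q : ℝ} (hq : 0 < q) : ContinuousOn (cw q) (Set.Ici 0) := by
  have h1 : Continuous fun t : ℝ => t ^ q := Real.continuous_rpow_const hq.le
  have h2 : Continuous fun t : ℝ => t ^ (q / 2) := Real.continuous_rpow_const (by positivity)
  exact (((continuous_const.add h1).rpow_const fun _ => Or.inr (by norm_num)).add h2).continuousOn

lemma integrand_eq {q R t : ℝ} (hq : 0 < q) (hR : R = 2 * q / (2 + q)) (ht : 0 ≤ t) :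
    (1 + phi q t ^ (q / 2)) ^ (-1 / R) *
        (2 ^ (2 / q) * cw q t ^ (2 / q + 1) / (1 + t ^ q) ^ ((1:ℝ)/2))
      = 2 ^ (2 / q) * (1 + t ^ q) ^ (-1 / (2:ℝ)) := by
  have hc := cw_pos (q := q) ht
  have hb : 0 < 1 + t ^ q := by positivity
  have e : ((2:ℕ):ℝ) * (-1 / R) = -(2 / q + 1) := by
    subst hR; push_cast; field_simp
  rw [one_add_phi_rpow hq ht, ← Real.rpow_natCast, ← Real.rpow_mul hc.le, e,
    Real.rpow_neg hc.le, neg_div, Real.rpow_neg hb.le]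
  have := Real.rpow_pos_of_pos hc (2 / q + 1)
  field_simp

/-- Multiple-angle formula of Theorem 4.1, hyperbolic case: for `0 < q` and
`R = 2q/(2+q)`, for every `s ∈ [0,∞)`,
`G_{R,q/2}(2^{2/q}·s·((1 + s^q)^{1/2} + s^{q/2})^{2/q}) = 2^{2/q} · G_{2,q}(s)`.
Equivalently,
`sinh_{R,q/2}(2^{2/q} x) = 2^{2/q}·sinh_{2,q} x·(cosh_{2,q} x + sinh_{2,q}^{q/2} x)^{2/q}`
for `x ∈ [0, π_{R,q}/2)`, where `cosh_{2,q} x = (1 + sinh_{2,q}^q x)^{1/2}`. -/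
theorem multiple_angle_hyp (q R : ℝ) (hq : 0 < q) (hR : R = 2 * q / (2 + q)) :
    ∀ s : ℝ, 0 ≤ s →
      (∫ u in (0:ℝ)..((2:ℝ) ^ (2 / q) * s * ((1 + s ^ q) ^ ((1:ℝ)/2) + s ^ (q / 2)) ^ (2 / q)),
          (1 + u ^ (q / 2)) ^ (-1 / R))
        = 2 ^ (2 / q) * ∫ t in (0:ℝ)..s, (1 + t ^ q) ^ (-1 / (2:ℝ)) := by
  intro s hs
  have hsub : Set.uIcc 0 s ⊆ Set.Ici 0 := by
    rw [Set.uIcc_of_le hs]; exact Set.Icc_subset_Ici_self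
  have hcw := (continuousOn_cw hq).mono hsub
  have hphi : ContinuousOn (phi q) (Set.uIcc 0 s) :=
    (continuousOn_const.mul continuousOn_id).mul
      (hcw.rpow_const fun t ht => Or.inl (cw_pos (hsub ht)).ne')
  have hcosh : ContinuousOn (fun t : ℝ => (1 + t ^ q) ^ ((1:ℝ)/2)) (Set.uIcc 0 s) :=
    ((continuous_const.add (Real.continuous_rpow_const hq.le)).rpow_const
      fun _ => Or.inr (by norm_num)).continuousOn
  have key := intervalIntegral.integral_comp_mul_deriv'' (a := 0) (b := s) (f := phi q)
    (f' := fun t => 2 ^ (2 / q) * cw q t ^ (2 / q + 1) / (1 + t ^ q) ^ ((1:ℝ)/2))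
    (g := fun u => (1 + u ^ (q / 2)) ^ (-1 / R)) hphi
    (fun t ht => by
      rw [min_eq_left hs] at ht
      exact (hasDerivAt_phi hq ht.1).hasDerivWithinAt)
    ((continuousOn_const.mul
      (hcw.rpow_const fun t ht => Or.inl (cw_pos (hsub ht)).ne')).div hcosh
      fun t ht => by
        have : 0 ≤ t := hsub ht
        positivity)
    (by
      refine ContinuousOn.rpow_const (continuous_const.add
        (Real.continuous_rpow_const (by positivity))).continuousOn ?_
      rintro _ ⟨t, ht, rfl⟩
      have := phi_nonneg (q := q) (hsub ht)
      left; positivity)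
  have h0 : phi q 0 = 0 := by simp [phi]
  rw [h0] at key
  refine key.symm.trans ?_
  rw [← intervalIntegral.integral_const_mul]
  exact intervalIntegral.integral_congr fun t ht => integrand_eq hq hR (hsub ht)
end

section
/- (Double-angle formula for sin_{6/5,3}, Lemma 4.2.) For every y ∈ (0,1) with 2·F_{6/5,3}(y) < π_{6/5,3}/2, setting c = (1 − y^3)^{5/6} (so that c^{3/5} = (1 − y^3)^{1/2}), one has F_{6/5,3}( 4·c^{1/5}·(3c^{3/5}+1)·(1−c^{3/5})^{1/3} / ( 16·c^{3/5} + (3c^{3/5}+1)^3·(1−c^{3/5}) )^{2/3} ) = 2·F_{6/5,3}(y). Equivalently, for x ∈ [0, π_{6/5,3}/4), sin_{6/5,3}(2x) = 4·cos_{6/5,3}^{1/5}x·(3cos_{6/5,3}^{3/5}x+1)·(1−cos_{6/5,3}^{3/5}x)^{1/3} / (16·cos_{6/5,3}^{3/5}x + (3cos_{6/5,3}^{3/5}x+1)^3·(1−cos_{6/5,3}^{3/5}x))^{2/3}. -/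
/-!
Put `s = c^{3/5} = (1 - y³)^{1/2}`, so that `y = (1 - s²)^{1/3}`, and write `A = 16 s`,
`B = (3 s + 1)³ (1 - s)`. The cube of the upper limit of integration is `u = 4AB/(A + B)²`, whence
`1 - u = ((A - B)/(A + B))²`, and `A - B = (s + 1)(3 s - 1)³`. With `K v = F(v^{1/3})` the claim
reads `K (u s) = 2 K (1 - s²)`. For `1/3 < s < 1` both sides have the same derivative in `s`
(`deriv_identity`), because `u' = -64 (A - B)(9 s² - 1)²/(A + B)³`; both vanish at `s = 1`, and both
are continuous on `[1/3, 1]`, so they agree there (`K_double`). At `s = 1/3` one has `u = 1`,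
i.e. `2 F((8/9)^{1/3}) = F(1)`; as `F` is monotone, the hypothesis `2 F(y) < F(1)` excludes `s < 1/3`.
-/

open MeasureTheory Real

namespace DoubleAngle

/-- The integrand `(1 - t³)^{-5/6}`. -/
noncomputable def f (t : ℝ) : ℝ := (1 - t ^ (3:ℝ)) ^ (-(5:ℝ)/6)

/-- The incomplete integral `F_{6/5,3}`. -/
noncomputable def F (x : ℝ) : ℝ := ∫ t in (0:ℝ)..x, f t

/-- `F` as a function of the cube of its argument. -/
noncomputable def K (v : ℝ) : ℝ := F (v ^ ((1:ℝ)/3))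

/-- The cube of the doubled sine, as a function of `s = (1 - y³)^{1/2}`. -/
noncomputable def u (s : ℝ) : ℝ :=
  64 * s * (3 * s + 1) ^ 3 * (1 - s) / (16 * s + (3 * s + 1) ^ 3 * (1 - s)) ^ 2

lemma cube_lt_one {t : ℝ} (h0 : 0 ≤ t) (h1 : t < 1) : t ^ (3:ℝ) < 1 :=
  Real.rpow_lt_one h0 h1 (by norm_num)

lemma f_nonneg {t : ℝ} (h0 : 0 ≤ t) (h1 : t ≤ 1) : 0 ≤ f t :=
  Real.rpow_nonneg (sub_nonneg.2 (Real.rpow_le_one h0 h1 (by norm_num))) _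

/-- Comparison with `(1 - t)^{-5/6}`, whose exponent exceeds `-1`. -/
lemma f_integrable : IntervalIntegrable f volume 0 1 := by
  have h1 : IntervalIntegrable (fun t : ℝ => (1 - t) ^ (-(5:ℝ)/6)) volume 0 1 := by
    have := (intervalIntegral.intervalIntegrable_rpow' (a := 0) (b := 1)
      (r := -(5:ℝ)/6) (by norm_num)).comp_sub_left 1
    simpa using this.symm
  refine h1.mono_fun' ?_ ?_
  · unfold f
    exact (by fun_prop : Measurable fun t : ℝ => (1 - t ^ (3:ℝ)) ^ (-(5:ℝ)/6)).aestronglyMeasurable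
  · rw [Set.uIoc_of_le zero_le_one, ← Measure.restrict_congr_set Ioo_ae_eq_Ioc]
    refine (ae_restrict_iff' measurableSet_Ioo).2 (Filter.Eventually.of_forall ?_)
    rintro t ⟨h0, h1⟩
    beta_reduce
    rw [Real.norm_of_nonneg (f_nonneg h0.le h1.le)]
    refine Real.rpow_le_rpow_of_nonpos (by linarith) ?_ (by norm_num)
    have : t ^ (3:ℝ) ≤ t ^ (1:ℝ) := Real.rpow_le_rpow_of_exponent_ge h0 h1.le (by norm_num)
    rw [Real.rpow_one] at this
    linarith

lemma F_continuousOn : ContinuousOn F (Set.Icc 0 1) := by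
  have := intervalIntegral.continuousOn_primitive_interval
    (f := f) (μ := volume) (a := 0) (b := 1)
    (by rw [Set.uIcc_of_le zero_le_one]
        exact (intervalIntegrable_iff_integrableOn_Icc_of_le zero_le_one).1 f_integrable)
  rwa [Set.uIcc_of_le zero_le_one] at this

lemma F_mono {x y : ℝ} (hx : 0 ≤ x) (hxy : x ≤ y) (hy : y ≤ 1) : F x ≤ F y := by
  refine intervalIntegral.integral_mono_interval le_rfl hx hxy ?_ ?_
  · refine (ae_restrict_iff' measurableSet_Ioc).2 (Filter.Eventually.of_forall ?_)
    intro t ht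
    exact f_nonneg ht.1.le (ht.2.trans hy)
  · refine f_integrable.mono_set ?_
    rw [Set.uIcc_of_le (hx.trans hxy), Set.uIcc_of_le zero_le_one]
    exact Set.Icc_subset_Icc_right hy

lemma F_hasDerivAt {x : ℝ} (h0 : 0 < x) (h1 : x < 1) : HasDerivAt F (f x) x := by
  have hm : Measurable f := by unfold f; fun_prop
  refine intervalIntegral.integral_hasDerivAt_right ?_
    hm.stronglyMeasurable.stronglyMeasurableAtFilter ?_
  · refine f_integrable.mono_set ?_
    rw [Set.uIcc_of_le h0.le, Set.uIcc_of_le zero_le_one]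
    exact Set.Icc_subset_Icc_right h1.le
  · have := cube_lt_one h0.le h1
    unfold f
    exact ContinuousAt.rpow_const
      (continuousAt_const.sub (Real.continuousAt_rpow_const _ _ (Or.inl h0.ne')))
      (Or.inl (by linarith))

lemma cbrt_mem {v : ℝ} (h0 : 0 ≤ v) (h1 : v ≤ 1) : v ^ ((1:ℝ)/3) ∈ Set.Icc (0:ℝ) 1 :=
  ⟨Real.rpow_nonneg h0 _, Real.rpow_le_one h0 h1 (by norm_num)⟩

lemma K_continuousOn : ContinuousOn K (Set.Icc 0 1) := by
  refine F_continuousOn.comp ?_ fun v hv => cbrt_mem hv.1 hv.2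
  exact (Real.continuous_rpow_const (by norm_num)).continuousOn

lemma K_mono {v w : ℝ} (hv : 0 ≤ v) (hvw : v ≤ w) (hw : w ≤ 1) : K v ≤ K w :=
  F_mono (Real.rpow_nonneg hv _) (Real.rpow_le_rpow hv hvw (by norm_num))
    (cbrt_mem (hv.trans hvw) hw).2

lemma K_hasDerivAt {v : ℝ} (h0 : 0 < v) (h1 : v < 1) :
    HasDerivAt K ((1 - v) ^ (-(5:ℝ)/6) * ((1/3) * v ^ (-(2:ℝ)/3))) v := by
  have hF := F_hasDerivAt (Real.rpow_pos_of_pos h0 ((1:ℝ)/3))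
    (Real.rpow_lt_one h0.le h1 (by norm_num))
  have hr := Real.hasDerivAt_rpow_const (x := v) (p := (1:ℝ)/3) (Or.inl h0.ne')
  have h := hF.comp v hr
  have e1 : f (v ^ ((1:ℝ)/3)) = (1 - v) ^ (-(5:ℝ)/6) := by
    unfold f
    rw [← Real.rpow_mul h0.le]
    norm_num
  have e2 : ((1:ℝ)/3 - 1) = -(2:ℝ)/3 := by norm_num
  rw [e1, e2] at h
  exact h

lemma denom_pos {s : ℝ} (h0 : 0 < s) (h1 : s ≤ 1) :
    0 < 16 * s + (3 * s + 1) ^ 3 * (1 - s) := by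
  have : 0 ≤ 1 - s := by linarith
  positivity

lemma one_sub_u {s : ℝ} (h0 : 0 < s) (h1 : s ≤ 1) :
    1 - u s = ((s + 1) * (3 * s - 1) ^ 3 / (16 * s + (3 * s + 1) ^ 3 * (1 - s))) ^ 2 := by
  have hD := pow_ne_zero 2 (denom_pos h0 h1).ne'
  rw [u, div_pow, eq_div_iff hD, sub_mul, div_mul_cancel₀ _ hD]
  ring

lemma u_nonneg {s : ℝ} (h0 : 0 < s) (h1 : s ≤ 1) : 0 ≤ u s := by
  have := denom_pos h0 h1
  have : 0 ≤ 1 - s := by linarith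
  unfold u
  positivity

lemma u_le_one {s : ℝ} (h0 : 0 < s) (h1 : s ≤ 1) : u s ≤ 1 := by
  have := one_sub_u h0 h1
  nlinarith [sq_nonneg ((s + 1) * (3 * s - 1) ^ 3 / (16 * s + (3 * s + 1) ^ 3 * (1 - s)))]

lemma u_hasDerivAt {s : ℝ} (h0 : 0 < s) (h1 : s ≤ 1) :
    HasDerivAt u (-64 * ((s + 1) * (3 * s - 1) ^ 3) * (9 * s ^ 2 - 1) ^ 2 /
      (16 * s + (3 * s + 1) ^ 3 * (1 - s)) ^ 3) s := by
  have hD := (denom_pos h0 h1).ne'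
  have hid := hasDerivAt_id' s
  have hB := (((hid.const_mul 3).add_const 1).pow 3).mul (hid.const_sub 1)
  have hN := (hid.const_mul 64).mul hB
  have h := hN.div (((hid.const_mul 16).add hB).pow 2) (pow_ne_zero 2 hD)
  refine (h.congr_deriv ?_).congr_of_eventuallyEq (Filter.Eventually.of_forall fun x => ?_)
  · simp only [Pi.mul_apply, Pi.add_apply, Pi.pow_apply]
    rw [div_eq_div_iff (pow_ne_zero 2 (pow_ne_zero 2 hD)) (pow_ne_zero 3 hD)]
    push_cast
    ring
  · simp only [u, Pi.mul_apply, Pi.add_apply, Pi.pow_apply, Pi.div_apply]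
    ring

lemma pow_three_rpow {x : ℝ} (hx : 0 < x) : (x ^ 3) ^ (-(2:ℝ)/3) = (x ^ 2)⁻¹ := by
  rw [← Real.rpow_natCast, ← Real.rpow_mul hx.le, ← Real.rpow_natCast, ← Real.rpow_neg hx.le]
  norm_num

lemma pow_six_rpow {x : ℝ} (hx : 0 < x) : (x ^ 6) ^ (-(5:ℝ)/6) = (x ^ 5)⁻¹ := by
  rw [← Real.rpow_natCast, ← Real.rpow_mul hx.le, ← Real.rpow_natCast, ← Real.rpow_neg hx.le]
  norm_num

lemma exists_cbrt {x : ℝ} (hx : 0 < x) : ∃ a : ℝ, 0 < a ∧ a ^ 3 = x := by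
  refine ⟨x ^ ((1:ℝ)/3), Real.rpow_pos_of_pos hx _, ?_⟩
  rw [← Real.rpow_natCast, ← Real.rpow_mul hx.le]
  norm_num

/-- The chain-rule derivatives of `K (u s)` and `2 K (1 - s²)` coincide. Once cube roots of
`s`, `1 - s`, `1 + s` and `A + B` are named, all the powers become integral. -/
lemma deriv_identity {s : ℝ} (h0 : 1/3 < s) (h1 : s < 1) :
    (1 - u s) ^ (-(5:ℝ)/6) * ((1/3) * u s ^ (-(2:ℝ)/3)) *
      (-64 * ((s + 1) * (3 * s - 1) ^ 3) * (9 * s ^ 2 - 1) ^ 2 /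
        (16 * s + (3 * s + 1) ^ 3 * (1 - s)) ^ 3) =
    2 * ((1 - (1 - s ^ 2)) ^ (-(5:ℝ)/6) * ((1/3) * (1 - s ^ 2) ^ (-(2:ℝ)/3)) * (-(2 * s))) := by
  have hs : 0 < s := by linarith
  have hD := denom_pos hs h1.le
  obtain ⟨a, ha, ha3⟩ := exists_cbrt hs
  obtain ⟨b, hb, hb3⟩ := exists_cbrt (sub_pos.2 h1)
  obtain ⟨d, hd, hd3⟩ := exists_cbrt (by linarith : 0 < s + 1)
  obtain ⟨e, he, he3⟩ := exists_cbrt hD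
  have hp : 0 < 3 * s + 1 := by linarith
  have hm : 0 < 3 * s - 1 := by linarith
  have e1 : 1 - u s = (d * (3 * s - 1) / e) ^ 6 := by
    rw [one_sub_u hs h1.le, ← he3, ← hd3]
    ring
  have e2 : u s = (4 * a * b * (3 * s + 1) / e ^ 2) ^ 3 := by
    have : (4 * a * b * (3 * s + 1) / e ^ 2) ^ 3
        = 64 * a ^ 3 * (3 * s + 1) ^ 3 * b ^ 3 / (e ^ 3) ^ 2 := by ring
    rw [this, ha3, hb3, he3, u]
  have e3 : 1 - (1 - s ^ 2) = a ^ 6 := by rw [← ha3]; ring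
  have e4 : 1 - s ^ 2 = (b * d) ^ 3 := by rw [mul_pow, hb3, hd3]; ring
  rw [e3, e4, pow_six_rpow ha, pow_three_rpow (mul_pos hb hd), e1, e2,
    pow_six_rpow (by positivity), pow_three_rpow (by positivity), ← he3, ← hd3]
  have e5 : 9 * s ^ 2 - 1 = (3 * s + 1) * (3 * s - 1) := by ring
  rw [e5]
  have hm' := hm.ne'
  have e6 : s = a ^ 3 := ha3.symm
  generalize 3 * s - 1 = m at *
  generalize 3 * s + 1 = p at *
  rw [e6]
  field_simp
  norm_num

lemma K_zero : K 0 = 0 := by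
  simp [K, F]

/-- The doubling formula in the variable `s`, including the endpoint `s = 1/3` where `u = 1`. -/
lemma K_double {s : ℝ} (h0 : 1/3 ≤ s) (h1 : s ≤ 1) : K (u s) = 2 * K (1 - s ^ 2) := by
  rcases h1.eq_or_lt with rfl | h1
  · simp [u, K_zero]
  have hcont : ContinuousOn (fun x => K (u x) - 2 * K (1 - x ^ 2)) (Set.Icc s 1) := by
    refine ContinuousOn.sub ?_ (continuousOn_const.mul ?_)
    · refine K_continuousOn.comp (fun x hx => ?_) fun x hx => ?_
      · exact (u_hasDerivAt (by linarith [hx.1]) hx.2).continuousAt.continuousWithinAt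
      · exact ⟨u_nonneg (by linarith [hx.1]) hx.2, u_le_one (by linarith [hx.1]) hx.2⟩
    · refine K_continuousOn.comp (by fun_prop) fun x hx => ?_
      constructor <;> nlinarith [hx.1, hx.2]
  obtain ⟨x, hx, hslope⟩ := exists_hasDerivAt_eq_slope
    (fun x => K (u x) - 2 * K (1 - x ^ 2)) (fun _ => 0) h1 hcont (by
      rintro x ⟨hx0, hx1⟩
      have hx3 : 1/3 < x := by linarith
      have hx : 0 < x := by linarith
      have hu1 : u x < 1 := by
        have hD := denom_pos hx hx1.le
        have hm : 0 < 3 * x - 1 := by linarith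
        have : 0 < 1 - u x := by rw [one_sub_u hx hx1.le]; positivity
        linarith
      have hu0 : 0 < u x := by
        have hD := denom_pos hx hx1.le
        have : 0 < 1 - x := by linarith
        unfold u
        positivity
      have d1 := (K_hasDerivAt hu0 hu1).comp x (u_hasDerivAt hx hx1.le)
      have dq : HasDerivAt (fun x : ℝ => 1 - x ^ 2) (-(2 * x)) x := by
        simpa using (hasDerivAt_pow 2 x).const_sub 1
      have d2 := (K_hasDerivAt (v := 1 - x ^ 2) (by nlinarith) (by nlinarith)).comp x dq
      have := d1.sub (d2.const_mul 2)
      rw [deriv_identity hx3 hx1, sub_self] at this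
      exact this)
  have hne : 1 - s ≠ 0 := by linarith
  have h2 : K (u 1) - 2 * K (1 - 1 ^ 2) = 0 := by simp [u, K_zero]
  rw [eq_div_iff hne, h2] at hslope
  linarith

end DoubleAngle

open DoubleAngle

/-- Double-angle formula for `sin_{6/5,3}` (Lemma 4.2): for every `y ∈ (0,1)`
with `2·F_{6/5,3}(y) < π_{6/5,3}/2`, setting `c = (1 - y^3)^{5/6}`,
`F_{6/5,3}(4·c^{1/5}·(3c^{3/5}+1)·(1-c^{3/5})^{1/3}
  / (16·c^{3/5} + (3c^{3/5}+1)^3·(1-c^{3/5}))^{2/3}) = 2·F_{6/5,3}(y)`.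
Equivalently, `sin_{6/5,3}(2x)` has the stated expression in `cos_{6/5,3} x`
for `x ∈ [0, π_{6/5,3}/4)`. -/
theorem double_angle_sin_65_3 :
    ∀ y : ℝ, 0 < y → y < 1 →
      2 * (∫ t in (0:ℝ)..y, (1 - t ^ (3:ℝ)) ^ (-(5:ℝ)/6))
        < ∫ t in (0:ℝ)..1, (1 - t ^ (3:ℝ)) ^ (-(5:ℝ)/6) →
      ∀ c : ℝ, c = (1 - y ^ (3:ℝ)) ^ ((5:ℝ)/6) →
      (∫ t in (0:ℝ)..(4 * c ^ ((1:ℝ)/5) * (3 * c ^ ((3:ℝ)/5) + 1) *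
            (1 - c ^ ((3:ℝ)/5)) ^ ((1:ℝ)/3) /
            (16 * c ^ ((3:ℝ)/5) + (3 * c ^ ((3:ℝ)/5) + 1) ^ (3:ℕ) *
              (1 - c ^ ((3:ℝ)/5))) ^ ((2:ℝ)/3)),
          (1 - t ^ (3:ℝ)) ^ (-(5:ℝ)/6))
        = 2 * ∫ t in (0:ℝ)..y, (1 - t ^ (3:ℝ)) ^ (-(5:ℝ)/6) := by
  intro y hy0 hy1 hF c hc
  have hy3 := cube_lt_one hy0.le hy1
  have hy3' := Real.rpow_pos_of_pos hy0 3
  obtain ⟨s, hs⟩ : ∃ s, s = c ^ ((3:ℝ)/5) := ⟨_, rfl⟩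
  have hc0 : 0 < c := hc ▸ Real.rpow_pos_of_pos (by linarith) _
  have hs0 : 0 < s := hs ▸ Real.rpow_pos_of_pos hc0 _
  have hs2 : s ^ 2 = 1 - y ^ (3:ℝ) := by
    rw [hs, hc, ← Real.rpow_mul (by linarith), ← Real.rpow_natCast, ← Real.rpow_mul (by linarith)]
    norm_num
  have hs1 : s < 1 := by nlinarith
  have hyK : F y = K (1 - s ^ 2) := by
    rw [K, hs2, sub_sub_cancel, ← Real.rpow_mul hy0.le]
    norm_num
  have h13 : 1/3 ≤ s := by
    by_contra! hlt
    have h := K_double (s := 1/3) le_rfl (by norm_num)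
    have hu : u (1/3) = 1 := by norm_num [u]
    have hm := K_mono (v := 1 - (1/3) ^ 2) (w := 1 - s ^ 2) (by norm_num) (by nlinarith)
      (by nlinarith)
    have hK1 : K 1 = F 1 := by simp [K]
    rw [hu, hK1] at h
    have hF' : 2 * F y < F 1 := hF
    linarith
  have hc5 : c ^ ((1:ℝ)/5) = s ^ ((1:ℝ)/3) := by
    rw [hs, ← Real.rpow_mul hc0.le]
    norm_num
  rw [hc5, ← hs]
  have hD := denom_pos hs0 hs1.le
  have h1s : 0 < 1 - s := by linarith
  have hG : 4 * s ^ ((1:ℝ)/3) * (3 * s + 1) * (1 - s) ^ ((1:ℝ)/3) /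
      (16 * s + (3 * s + 1) ^ (3:ℕ) * (1 - s)) ^ ((2:ℝ)/3) = u s ^ ((1:ℝ)/3) := by
    have cb : ∀ x : ℝ, 0 < x → (x ^ ((1:ℝ)/3)) ^ 3 = x := fun x hx => by
      rw [← Real.rpow_natCast, ← Real.rpow_mul hx.le]; norm_num
    have cb2 : ∀ x : ℝ, 0 < x → (x ^ ((2:ℝ)/3)) ^ 3 = x ^ 2 := fun x hx => by
      rw [← Real.rpow_natCast, ← Real.rpow_mul hx.le, ← Real.rpow_natCast]; norm_num
    have hu0 : 0 < u s := by unfold u; positivity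
    refine (pow_left_inj₀ (by positivity) (by positivity) (three_ne_zero)).1 ?_
    rw [cb _ hu0, div_pow, cb2 _ hD, mul_pow, mul_pow, mul_pow, cb _ hs0, cb _ h1s, u]
    ring
  rw [hG]
  have := K_double h13 hs1.le
  rw [← hyK] at this
  exact this
end
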